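/- Let f_1, …, f_s ∈ ℤ[x_1, …, x_t] be polynomials of total degree between 1 and d and height at most H that share a common zero in ℂ^t. Let L = s·C(d^t + t, t). Then there exists a prime p with p < 6 + 2L·log₂ H + L·log₂ L such that the reductions of f_1, …, f_s modulo p have a common zero in an algebraic closure of GF(p). -/

import Mathlib

/-!
For `s ≥ 2`, an integer `M ≠ 0` with `2 log₂ M ≤ 2 L log₂ H + L log₂ L` is constructed such that
every prime `p ∤ M` preserves solvability. A prime `p ∤ M` with `p < 6 + 2 log₂ M` exists, since
the product of all primes up to `m` exceeds `2 ^ ((m - 5) / 2)` (`exists_prime_not_dvd`).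

*Reduction to algebraic coordinates.* Among all common zeros `ξ` in fields of characteristic zero
and all sets `J` of coordinates algebraically independent at `ξ`, take a maximal `J`
(`exists_maximal_indep`), and put `A = ℤ[x_J]`, which embeds into the field `F` of `ξ`. Over `A`
the system in the remaining `n` unknowns has only zeros with coordinates algebraic over `F`.

*Elimination.* The equations are deformed to the `n` equations
`P_j = E x_j ^ d + ∑ i, u_j ^ (i + 1) f_i` of degree `d` and joined by the linear form
`W + ∑ j, w_j x_j`. The determinant `Δ(E, W, u, w)` of their Macaulay matrix in degree
`n (d - 1) + 1` vanishes wherever these `n + 1` polynomials have a common zero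
(`det_macaulay_eq_zero`), and it is not zero, as the matrix is the identity for `E = W = 1`,
`u = w = 0`. Krull's height theorem shows that the point `E = 0`, `x = ξ` lies on a component of
`P_1 = ⋯ = P_n = 0` on which `E` does not vanish identically (`exists_krull_prime`). Hence the
lowest coefficient `D` of `Δ` with respect to `E` has the root `W = -∑ j, ξ_j w_j`
(`genDet_root`).

*Reduction modulo `p`.* Let `M` be a nonzero integer coefficient of the leading coefficient of `D`
with respect to `W`. If `p ∤ M`, take a valuation ring `O` of `F` whose maximal ideal contracts to
`pA`. The leading coefficient of `D` is then a unit for the Gauss extension of `O` to `F(u, w)`,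
so that `∑ j, ξ_j w_j` is integral there and all `ξ_j` lie in `O` (`mem_of_root`). Reducing `ξ`
gives a common zero in characteristic `p`, and the Nullstellensatz one over the algebraic closure
of the prime field (`exists_zero_of_mem_valuationSubring`).

*Size.* The matrix has `R ≤ C(d ^ t + t, t) = L / s` rows. Every row has `ℓ¹`-norm at most
`H (1 + L)`, and one of them at most `1 + n`; so `|M| ≤ (H (1 + L)) ^ (R - 1) (1 + n)`
(`norm_penDet_le`), which is sufficient for `s ≥ 2` (`two_mul_logb_le`). A single equation is
treated directly (`exists_prime_single`).
-/

/-! ### Small primes not dividing an integer -/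

/-- Rearrangement of the bound `Chebyshev.theta_ge`, which only becomes strong enough for large
`m`. -/
theorem primorial_large (m : ℕ) (hm : 2304 ≤ m) : 2 ^ m < 32 * primorial m ^ 2 := by
  have h1 := Chebyshev.theta_ge m
  rw [Chebyshev.theta_eq_log_primorial, Nat.floor_natCast] at h1
  have hmr : (2304 : ℝ) ≤ m := by exact_mod_cast hm
  set y : ℝ := √(m : ℝ) with hy
  have hy2 : y ^ 2 = m := Real.sq_sqrt (by positivity)
  have hy48 : (48 : ℝ) ≤ y := Real.le_sqrt_of_sq_le (by norm_num at hmr ⊢; exact hm)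
  have hl2 := Real.log_two_gt_d9
  have hl2' := Real.log_two_lt_d9
  have hlogy : Real.log y ≤ y / 64 + 6 * Real.log 2 - 1 := by
    have := Real.log_le_sub_one_of_pos (show 0 < y / 64 by positivity)
    rw [Real.log_div (by positivity) (by norm_num), show (64 : ℝ) = 2 ^ 6 by norm_num,
      Real.log_pow] at this
    push_cast at this
    linarith
  have hlogm : Real.log m = 2 * Real.log y := by rw [← hy2, Real.log_pow]; norm_num
  have hlogm1 : Real.log (m + 1) ≤ Real.log 2 + 2 * Real.log y := by
    rw [← hlogm, ← Real.log_mul (by norm_num) (by positivity)]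
    exact Real.log_le_log (by positivity) (by linarith)
  have key : (m : ℝ) * Real.log 2 < 5 * Real.log 2 + 2 * Real.log (primorial m) := by
    rw [hlogm] at h1
    have h1 : y ^ 2 * Real.log 2 - Real.log (m + 1) - 2 * y * (2 * Real.log y) ≤
        Real.log (primorial m) := by rw [hy2]; exact h1
    rw [← hy2]
    have hly : Real.log y ≤ y / 64 + 3.1589 := by linarith
    have : y * Real.log y ≤ y * (y / 64 + 3.1589) := by gcongr
    nlinarith
  have hpos : (0 : ℝ) < primorial m := by exact_mod_cast primorial_pos m
  have : Real.log ((2 : ℝ) ^ m) < Real.log (32 * (primorial m : ℝ) ^ 2) := by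
    rw [Real.log_mul (by norm_num) (by positivity), show (32 : ℝ) = 2 ^ 5 by norm_num]
    simp only [Real.log_pow]
    push_cast
    linarith
  exact_mod_cast (Real.log_lt_log_iff (by positivity) (by positivity)).1 this

/-- The primes up to `a`, by trial division by numbers below `31`; correct for `a < 31 ^ 2`. -/
def sieve (a : ℕ) : List ℕ :=
  (List.range (a + 1)).filter fun p =>
    2 ≤ p ∧ ∀ k ∈ List.range 31, 2 ≤ k → k * k ≤ p → ¬ k ∣ p

theorem prime_of_mem_sieve {a p : ℕ} (ha : a < 961) (hp : p ∈ sieve a) : p.Prime ∧ p ≤ a := by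
  simp only [sieve, List.mem_filter, List.mem_range, decide_eq_true_eq] at hp
  refine ⟨Nat.prime_def_le_sqrt.2 ⟨hp.2.1, fun k hk hkp => ?_⟩, by omega⟩
  have := Nat.le_sqrt.1 hkp
  exact hp.2.2 k (by nlinarith) hk this

/-- A single numerical inequality at `a` and `b` settles every `m` in between. -/
theorem primorial_step (a b : ℕ) (ha : a < 961) (h : 2 ^ b < 32 * (sieve a).prod ^ 2)
    (m : ℕ) (ham : a ≤ m) (hmb : m ≤ b) : 2 ^ m < 32 * primorial m ^ 2 := by
  have h1 : (sieve a).prod ≤ primorial m := by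
    have : (sieve a).prod = ∏ p ∈ (sieve a).toFinset, p := by
      rw [List.prod_toFinset _ (show (sieve a).Nodup from List.nodup_range.filter _)]; simp
    rw [this]
    refine Finset.prod_le_prod_of_subset_of_one_le' ?_ ?_
    · intro p hp
      have := prime_of_mem_sieve ha (List.mem_toFinset.1 hp)
      simp only [Finset.mem_filter, Finset.mem_range]
      exact ⟨by omega, this.1⟩
    · intro p hp _
      simp only [Finset.mem_filter] at hp
      exact hp.2.one_lt.le
  calc 2 ^ m ≤ 2 ^ b := Nat.pow_le_pow_right (by norm_num) hmb
    _ < _ := h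
    _ ≤ _ := by gcongr

/-- An explicit Chebyshev-type bound: the product of the primes up to `m` exceeds
`2 ^ ((m - 5) / 2)`. -/
theorem two_pow_lt_primorial (m : ℕ) : 2 ^ m < 32 * primorial m ^ 2 := by
  rcases lt_or_ge m 2304 with h | h
  · rcases lt_or_ge m 5 with h | h
    · exact primorial_step 0 4 (by norm_num) (by decide +kernel) m (by omega) (by omega)
    rcases lt_or_ge m 14 with h | h
    · exact primorial_step 5 14 (by norm_num) (by decide +kernel) m (by omega) (by omega)
    rcases lt_or_ge m 34 with h | h
    · exact primorial_step 14 34 (by norm_num) (by decide +kernel) m (by omega) (by omega)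
    rcases lt_or_ge m 80 with h | h
    · exact primorial_step 34 80 (by norm_num) (by decide +kernel) m (by omega) (by omega)
    rcases lt_or_ge m 200 with h | h
    · exact primorial_step 80 200 (by norm_num) (by decide +kernel) m (by omega) (by omega)
    rcases lt_or_ge m 500 with h | h
    · exact primorial_step 200 500 (by norm_num) (by decide +kernel) m (by omega) (by omega)
    rcases lt_or_ge m 900 with h | h
    · exact primorial_step 500 900 (by norm_num) (by decide +kernel) m (by omega) (by omega)
    · exact primorial_step 900 2304 (by norm_num) (by decide +kernel) m (by omega) (by omega)
  · exact primorial_large m h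

/-- The least prime `p` not dividing `M` is small, because the product of all primes below `p`
divides `M`. -/
theorem exists_prime_not_dvd (M : ℕ) (hM : M ≠ 0) :
    ∃ p : ℕ, p.Prime ∧ ¬ p ∣ M ∧ (p : ℝ) < 6 + 2 * Real.logb 2 M := by
  have hex : ∃ p : ℕ, p.Prime ∧ ¬ p ∣ M := by
    obtain ⟨p, hp, hpp⟩ := Nat.exists_infinite_primes (M + 1)
    exact ⟨p, hpp, fun h => by have := Nat.le_of_dvd (Nat.pos_of_ne_zero hM) h; omega⟩
  classical
  refine ⟨Nat.find hex, (Nat.find_spec hex).1, (Nat.find_spec hex).2, ?_⟩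
  set p := Nat.find hex with hp
  have hp2 : 1 ≤ p := (Nat.find_spec hex).1.one_lt.le
  have hdvd : primorial (p - 1) ∣ M := by
    refine Finset.prod_primes_dvd _ (fun q hq => ?_) (fun q hq => ?_)
    · simp only [Finset.mem_filter] at hq
      exact hq.2.prime
    · simp only [Finset.mem_filter, Finset.mem_range] at hq
      have := Nat.find_min hex (show q < Nat.find hex by omega)
      tauto
  have h1 := two_pow_lt_primorial (p - 1)
  have h2 : 2 ^ (p - 1) < 32 * M ^ 2 := by
    have := Nat.le_of_dvd (Nat.pos_of_ne_zero hM) hdvd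
    exact h1.trans_le (by gcongr)
  have h3 : (2 : ℝ) ^ (p - 1) < 2 ^ 5 * (M : ℝ) ^ 2 := by
    norm_num
    exact_mod_cast h2
  have hM' : (0 : ℝ) < M := by exact_mod_cast Nat.pos_of_ne_zero hM
  have h4 := Real.logb_lt_logb (b := 2) (by norm_num) (by positivity) h3
  rw [Real.logb_mul (by positivity) (by positivity)] at h4
  simp only [Real.logb_pow, Real.logb_self_eq_one (show (1 : ℝ) < 2 by norm_num)] at h4
  push_cast [Nat.cast_sub hp2] at h4
  linarith

/-! ### A lower bound for heights of prime ideals -/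

/-- `Q` contains the extension of its contraction strictly, as the latter contains `h` only if it
contains all coefficients of `h`; and going down makes height additive along the extension. -/
theorem height_add_one_le {A : Type*} [CommRing A] [IsNoetherianRing A]
    (Q : Ideal (Polynomial A)) [Q.IsPrime] (h : Polynomial A) (hQ : h ∈ Q) (k : ℕ)
    (hk : Polynomial.C (h.coeff k) ∉ Q) :
    (Q.comap (Polynomial.C : A →+* Polynomial A)).height + 1 ≤ Q.height := by
  set p := Q.comap (Polynomial.C : A →+* Polynomial A) with hp
  have hpp : p.IsPrime := inferInstance
  have hle : p.map (Polynomial.C : A →+* Polynomial A) ≤ Q := Ideal.map_comap_le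
  have hlt : p.map (Polynomial.C : A →+* Polynomial A) < Q := by
    refine lt_of_le_of_ne hle fun heq => hk ?_
    rw [← heq, Ideal.mem_map_C_iff] at hQ
    exact hQ k
  have h1 := Ideal.height_add_one_le_of_lt_of_isPrime hlt
  have : (p.map (Polynomial.C : A →+* Polynomial A)).LiesOver p := by
    constructor
    ext a
    simp only [Ideal.mem_comap, Polynomial.algebraMap_eq, Ideal.under_def, Ideal.mem_map_C_iff,
      Polynomial.coeff_C]
    refine ⟨fun ha n => by split_ifs <;> simp [ha], fun ha => by simpa using ha 0⟩
  have h2 := Ideal.height_eq_height_add_of_liesOver_of_hasGoingDown p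
    (p.map (Polynomial.C : A →+* Polynomial A))
  refine le_trans ?_ h1
  rw [h2]
  gcongr
  exact le_self_add

/-- The case of finitely many numbered variables, splitting off one variable at a time. -/
theorem card_le_height_fin {S : Type*} [CommRing S] [IsNoetherianRing S] (n : ℕ)
    (Q : Ideal (MvPolynomial (Fin n) S)) [Q.IsPrime]
    (h : ∀ j, ∃ q : Polynomial S, (∃ k, MvPolynomial.C (q.coeff k) ∉ Q) ∧
      Polynomial.aeval (MvPolynomial.X j) q ∈ Q) : (n : ℕ∞) ≤ Q.height := by
  induction n with
  | zero => simp
  | succ n ih =>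
    let e := MvPolynomial.finSuccEquiv S n
    let Q' : Ideal (Polynomial (MvPolynomial (Fin n) S)) := Q.comap e.symm.toRingEquiv
    have hQ' : Q'.IsPrime := Ideal.comap_isPrime _ _
    have hmem : ∀ a, a ∈ Q' ↔ e.symm a ∈ Q := fun a => Iff.rfl
    have hht : Q'.height = Q.height := RingEquiv.height_comap _ _
    have hC : ∀ a : S, e.symm (Polynomial.C (MvPolynomial.C a)) = MvPolynomial.C a := by
      intro a
      exact e.symm.commutes a
    have ih' := ih (Q'.comap (Polynomial.C)) (by
      intro j
      obtain ⟨q, ⟨k, hk⟩, hq⟩ := h j.succ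
      refine ⟨q, ⟨k, ?_⟩, ?_⟩
      · rwa [Ideal.mem_comap, hmem, hC]
      · rw [Ideal.mem_comap, hmem]
        convert hq using 1
        have hCa : Polynomial.C (Polynomial.aeval (MvPolynomial.X j) q) =
            (Polynomial.CAlgHom : _ →ₐ[S] Polynomial (MvPolynomial (Fin n) S))
              (Polynomial.aeval (MvPolynomial.X j) q) := rfl
        rw [hCa, AlgEquiv.symm_apply_eq, ← Polynomial.aeval_algHom_apply,
          ← AlgEquiv.coe_toAlgHom, ← Polynomial.aeval_algHom_apply]
        simp only [AlgEquiv.coe_toAlgHom, e, MvPolynomial.finSuccEquiv_X_succ]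
        rfl)
    obtain ⟨q, ⟨k, hk⟩, hq⟩ := h 0
    have h0 := height_add_one_le Q' (q.map MvPolynomial.C) (by
      rw [hmem]
      convert hq using 1
      rw [AlgEquiv.symm_apply_eq, ← AlgEquiv.coe_toAlgHom, ← Polynomial.aeval_algHom_apply]
      simp only [AlgEquiv.coe_toAlgHom, e, MvPolynomial.finSuccEquiv_X_zero]
      rfl) k (by
      rw [hmem, Polynomial.coeff_map, hC]
      exact hk)
    rw [← hht]
    refine le_trans ?_ h0
    push_cast
    gcongr

/-- If modulo the prime `Q` every variable satisfies a nontrivial polynomial relation over `S`,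
then the height of `Q` is at least the number of variables. The presentation `e` of the ring as a
polynomial ring is kept explicit, since it is applied to two different choices of variables. -/
theorem card_le_height {τ R S : Type*} [Finite τ] [CommRing R] [CommRing S] [IsNoetherianRing S]
    (e : MvPolynomial τ S ≃+* R) (Q : Ideal R) [Q.IsPrime]
    (h : ∀ j, ∃ q : Polynomial S, (∃ k, e (MvPolynomial.C (q.coeff k)) ∉ Q) ∧
      e (Polynomial.aeval (MvPolynomial.X j) q) ∈ Q) : (Nat.card τ : ℕ∞) ≤ Q.height := by
  let r := MvPolynomial.renameEquiv S (Finite.equivFin τ).symm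
  have := card_le_height_fin (Nat.card τ) (Q.comap (r.toRingEquiv.trans e)) (by
    intro j
    obtain ⟨q, ⟨k, hk⟩, hq⟩ := h ((Finite.equivFin τ).symm j)
    refine ⟨q, ⟨k, ?_⟩, ?_⟩
    · rw [Ideal.mem_comap]
      simpa [r] using hk
    · rw [Ideal.mem_comap]
      convert hq using 1
      have : r (Polynomial.aeval (MvPolynomial.X j) q) =
          Polynomial.aeval (MvPolynomial.X ((Finite.equivFin τ).symm j)) q := by
        rw [← AlgEquiv.coe_toAlgHom, ← Polynomial.aeval_algHom_apply]
        simp [r]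
      simp [← this])
  rwa [RingEquiv.height_comap] at this

/-! ### Lengths of polynomials -/

/-- `N` is a subadditive, submultiplicative size function on `R`. Natural number values suffice,
since everything is eventually measured by absolute values of integers. -/
structure IsSubmultNorm {R : Type*} [CommRing R] (N : R → ℕ) : Prop where
  zero : N 0 = 0
  one : N 1 ≤ 1
  neg : ∀ a, N (-a) = N a
  add : ∀ a b, N (a + b) ≤ N a + N b
  mul : ∀ a b, N (a * b) ≤ N a * N b

namespace IsSubmultNorm

variable {R : Type*} [CommRing R] {N : R → ℕ}

theorem sum (hN : IsSubmultNorm N) {ι : Type*} (s : Finset ι) (g : ι → R) :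
    N (∑ i ∈ s, g i) ≤ ∑ i ∈ s, N (g i) :=
  Finset.le_sum_of_subadditive N hN.zero.le hN.add s g

theorem prod (hN : IsSubmultNorm N) {ι : Type*} (s : Finset ι) (g : ι → R) :
    N (∏ i ∈ s, g i) ≤ ∏ i ∈ s, N (g i) := by
  classical
  induction s using Finset.induction_on with
  | empty => simpa using hN.one
  | insert a s ha ih =>
    rw [Finset.prod_insert ha, Finset.prod_insert ha]
    exact (hN.mul _ _).trans (by gcongr)

theorem pow_le_one (hN : IsSubmultNorm N) {a : R} (ha : N a ≤ 1) (k : ℕ) : N (a ^ k) ≤ 1 := by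
  induction k with
  | zero => simpa using hN.one
  | succ k ih =>
    rw [pow_succ]
    exact (hN.mul _ _).trans (by nlinarith)

theorem prod_le_one (hN : IsSubmultNorm N) {ι : Type*} (s : Finset ι) (g : ι → R)
    (h : ∀ i ∈ s, N (g i) ≤ 1) : N (∏ i ∈ s, g i) ≤ 1 :=
  (hN.prod s g).trans (Finset.prod_le_one' h)

theorem int : IsSubmultNorm Int.natAbs where
  zero := rfl
  one := le_rfl
  neg := Int.natAbs_neg
  add := Int.natAbs_add_le
  mul a b := (Int.natAbs_mul a b).le

theorem intCast_le (hN : IsSubmultNorm N) (c : ℤ) : N (c : R) ≤ c.natAbs := by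
  have key : ∀ n : ℕ, N (n : R) ≤ n := by
    intro n
    induction n with
    | zero => simp [hN.zero]
    | succ n ih =>
      push_cast
      exact (hN.add _ _).trans (add_le_add ih hN.one)
  obtain ⟨n, rfl | rfl⟩ := c.eq_nat_or_neg
  · simpa using key n
  · simpa [hN.neg] using key n

end IsSubmultNorm

/-- The `ℓ¹`-norm of a polynomial whose coefficients are measured by `N`. -/
noncomputable def polyNorm {R : Type*} [CommRing R] (N : R → ℕ) (p : Polynomial R) : ℕ :=
  ∑ k ∈ p.support, N (p.coeff k)

/-- The `ℓ¹`-norm of a multivariate polynomial whose coefficients are measured by `N`. -/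
noncomputable def mvNorm {σ R : Type*} [CommRing R] (N : R → ℕ) (p : MvPolynomial σ R) : ℕ :=
  ∑ m ∈ p.support, N (p.coeff m)

namespace IsSubmultNorm

variable {R : Type*} [CommRing R] {N : R → ℕ} {σ : Type*}

theorem sum_coeff_le_polyNorm (hN : IsSubmultNorm N) (p : Polynomial R) (s : Finset ℕ) :
    ∑ k ∈ s, N (p.coeff k) ≤ polyNorm N p := by
  unfold polyNorm
  refine Finset.sum_le_sum_of_ne_zero fun k _ hk => ?_
  rw [Polynomial.mem_support_iff]
  rintro h
  exact hk (by rw [h, hN.zero])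

theorem sum_coeff_le_mvNorm (hN : IsSubmultNorm N) (p : MvPolynomial σ R)
    (s : Finset (σ →₀ ℕ)) : ∑ k ∈ s, N (p.coeff k) ≤ mvNorm N p := by
  unfold mvNorm
  refine Finset.sum_le_sum_of_ne_zero fun k _ hk => ?_
  rw [MvPolynomial.mem_support_iff]
  rintro h
  exact hk (by rw [h, hN.zero])

theorem coeff_le_polyNorm (hN : IsSubmultNorm N) (p : Polynomial R) (k : ℕ) :
    N (p.coeff k) ≤ polyNorm N p := by
  simpa using hN.sum_coeff_le_polyNorm p {k}

theorem coeff_le_mvNorm (hN : IsSubmultNorm N) (p : MvPolynomial σ R) (k : σ →₀ ℕ) :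
    N (p.coeff k) ≤ mvNorm N p := by
  simpa using hN.sum_coeff_le_mvNorm p {k}

theorem polyNorm_add (hN : IsSubmultNorm N) (p q : Polynomial R) :
    polyNorm N (p + q) ≤ polyNorm N p + polyNorm N q :=
  calc polyNorm N (p + q) ≤ ∑ k ∈ (p + q).support, (N (p.coeff k) + N (q.coeff k)) :=
        Finset.sum_le_sum fun k _ => by rw [Polynomial.coeff_add]; exact hN.add _ _
    _ ≤ _ := by
        rw [Finset.sum_add_distrib]
        exact add_le_add (hN.sum_coeff_le_polyNorm p _) (hN.sum_coeff_le_polyNorm q _)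

theorem mvNorm_add (hN : IsSubmultNorm N) (p q : MvPolynomial σ R) :
    mvNorm N (p + q) ≤ mvNorm N p + mvNorm N q :=
  calc mvNorm N (p + q) ≤ ∑ k ∈ (p + q).support, (N (p.coeff k) + N (q.coeff k)) :=
        Finset.sum_le_sum fun k _ => by rw [MvPolynomial.coeff_add]; exact hN.add _ _
    _ ≤ _ := by
        rw [Finset.sum_add_distrib]
        exact add_le_add (hN.sum_coeff_le_mvNorm p _) (hN.sum_coeff_le_mvNorm q _)

theorem polyNorm_monomial (k : ℕ) (a : R) :
    polyNorm N (Polynomial.monomial k a) ≤ N a := by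
  classical
  unfold polyNorm
  refine (Finset.sum_le_sum_of_subset ((Polynomial.support_monomial_subset k a))).trans ?_
  simp

theorem mvNorm_monomial (k : σ →₀ ℕ) (a : R) :
    mvNorm N (MvPolynomial.monomial k a) ≤ N a := by
  classical
  unfold mvNorm
  refine (Finset.sum_le_sum_of_subset MvPolynomial.support_monomial_subset).trans ?_
  simp

theorem poly (hN : IsSubmultNorm N) : IsSubmultNorm (polyNorm N) where
  zero := by simp [polyNorm]
  one := (polyNorm_monomial 0 1).trans hN.one
  neg a := by simp [polyNorm, hN.neg]
  add := hN.polyNorm_add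
  mul p q := by
    have hs : ∀ {ι : Type} (s : Finset ι) (g : ι → Polynomial R),
        polyNorm N (∑ i ∈ s, g i) ≤ ∑ i ∈ s, polyNorm N (g i) := fun s g =>
      Finset.le_sum_of_subadditive _ (by simp [polyNorm]) hN.polyNorm_add s g
    rw [Polynomial.mul_eq_sum_sum]
    refine (hs _ _).trans ?_
    unfold Polynomial.sum
    conv_rhs => rw [polyNorm, polyNorm, Finset.sum_mul_sum]
    refine Finset.sum_le_sum fun i _ => (hs _ _).trans ?_
    exact Finset.sum_le_sum fun j _ => (polyNorm_monomial _ _).trans (hN.mul _ _)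

theorem mv (hN : IsSubmultNorm N) : IsSubmultNorm (mvNorm N : MvPolynomial σ R → ℕ) where
  zero := by simp [mvNorm]
  one := (mvNorm_monomial 0 1).trans hN.one
  neg a := by simp [mvNorm, hN.neg]
  add := hN.mvNorm_add
  mul p q := by
    have hs : ∀ (s : Finset (σ →₀ ℕ)) (g : (σ →₀ ℕ) → MvPolynomial σ R),
        mvNorm N (∑ i ∈ s, g i) ≤ ∑ i ∈ s, mvNorm N (g i) := fun s g =>
      Finset.le_sum_of_subadditive _ (by simp [mvNorm]) hN.mvNorm_add s g
    rw [MvPolynomial.mul_def]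
    refine (hs _ _).trans ?_
    unfold Finsupp.sum
    conv_rhs => rw [mvNorm, mvNorm, Finset.sum_mul_sum]
    refine Finset.sum_le_sum fun i _ => (hs _ _).trans ?_
    exact Finset.sum_le_sum fun j _ => (mvNorm_monomial _ _).trans (hN.mul _ _)

theorem polyNorm_C (a : R) : polyNorm N (Polynomial.C a) ≤ N a :=
  polyNorm_monomial 0 a

theorem polyNorm_X (hN : IsSubmultNorm N) : polyNorm N (Polynomial.X : Polynomial R) ≤ 1 :=
  (polyNorm_monomial 1 1).trans hN.one

theorem mvNorm_C (a : R) :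
    mvNorm N (MvPolynomial.C a : MvPolynomial σ R) ≤ N a :=
  mvNorm_monomial 0 a

theorem mvNorm_X (hN : IsSubmultNorm N) (i : σ) :
    mvNorm N (MvPolynomial.X i : MvPolynomial σ R) ≤ 1 :=
  (mvNorm_monomial _ 1).trans hN.one

theorem aeval_le (hN : IsSubmultNorm N) (v : σ → R) (hv : ∀ i, N (v i) ≤ 1)
    (p : MvPolynomial σ ℤ) :
    N (MvPolynomial.aeval v p) ≤ ∑ m ∈ p.support, (p.coeff m).natAbs := by
  rw [MvPolynomial.aeval_def, MvPolynomial.eval₂_eq]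
  refine (hN.sum _ _).trans (Finset.sum_le_sum fun m _ => (hN.mul _ _).trans ?_)
  have h1 := hN.intCast_le (p.coeff m)
  have h2 := hN.prod_le_one m.support (fun i => v i ^ m i) fun i _ => hN.pow_le_one (hv i) _
  calc _ ≤ (p.coeff m).natAbs * 1 := Nat.mul_le_mul (by simpa using h1) h2
    _ = _ := mul_one _

/-- The Leibniz expansion is part of the expanded product of the row sums. -/
theorem det_le (hN : IsSubmultNorm N) {n : Type*} [Fintype n] [DecidableEq n]
    (A : Matrix n n R) : N A.det ≤ ∏ i, ∑ j, N (A i j) := by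
  rw [← Matrix.det_transpose, Matrix.det_apply, Finset.prod_univ_sum]
  have h1 : ∀ g : Equiv.Perm n, N (Equiv.Perm.sign g • ∏ i, A.transpose (g i) i) ≤
      ∏ i, N (A i (g i)) := by
    intro g
    have : N (Equiv.Perm.sign g • ∏ i, A.transpose (g i) i) =
        N (∏ i, A.transpose (g i) i) := by
      rcases Int.units_eq_one_or (Equiv.Perm.sign g) with h | h <;> simp [h, hN.neg]
    rw [this]
    exact hN.prod _ _
  refine (hN.sum _ _).trans ((Finset.sum_le_sum fun g _ => h1 g).trans ?_)
  rw [Fintype.piFinset_univ]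
  have hinj : Function.Injective fun g : Equiv.Perm n => (g : n → n) := Equiv.coe_fn_injective
  rw [← Finset.sum_image (s := Finset.univ) (g := fun g : Equiv.Perm n => (g : n → n))
    (f := fun g => ∏ i, N (A i (g i))) (fun _ _ _ _ h => hinj h)]
  exact Finset.sum_le_sum_of_subset (Finset.subset_univ _)

end IsSubmultNorm

/-! ### Macaulay matrices -/

/-- Monomials of degree at most `N` correspond to monomials of degree `N` in one more variable. -/
theorem card_degree_le {σ : Type*} [Fintype σ] (N : ℕ) (s : Finset (σ →₀ ℕ))
    (hs : ∀ α ∈ s, α.degree ≤ N) : s.card ≤ (N + Fintype.card σ).choose (Fintype.card σ) := by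
  classical
  have h1 : s.card ≤ ((Finset.univ : Finset (Option σ)).finsuppAntidiag N).card := by
    refine Finset.card_le_card_of_injOn
      (fun α => Finsupp.equivFunOnFinite.symm fun o => o.elim (N - α.degree) α) ?_ ?_
    · intro α hα
      have := hs α hα
      rw [Finset.mem_coe, Finset.mem_finsuppAntidiag]
      refine ⟨?_, Finset.subset_univ _⟩
      rw [Fintype.sum_option]
      simp only [Finsupp.equivFunOnFinite_symm_apply_apply, Option.elim]
      rw [← Finsupp.degree_eq_sum]
      omega
    · intro α _ β _ h
      ext i
      simpa using DFunLike.congr_fun h (some i)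
  refine h1.trans ?_
  rw [Finset.card_finsuppAntidiag_nat_eq_choose]
  simp only [Finset.card_univ, Fintype.card_option]
  rw [show Fintype.card σ + 1 + N - 1 = N + Fintype.card σ by omega, Nat.choose_symm_add]

section Macaulay

variable {σ A B : Type*} [CommRing A] [CommRing B]

/-- The exponents of the monomials of degree at most `N`, indexing the rows and columns of the
Macaulay matrix. -/
abbrev MacIndex (σ : Type*) (N : ℕ) := {α : σ →₀ ℕ // α.degree ≤ N}

noncomputable instance [Finite σ] (N : ℕ) : Fintype (MacIndex σ N) :=
  @Fintype.ofFinite _ (Finsupp.finite_of_degree_le N)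

open Classical in
/-- The row of the Macaulay matrix belonging to `α`, as a polynomial: if `X ^ α` is divisible by
some `X j ^ d`, that factor is replaced by `P j`; otherwise `X ^ α` is multiplied by the
polynomial `l`. -/
noncomputable def macRow (d : ℕ) (P : σ → MvPolynomial σ A) (l : MvPolynomial σ A)
    (α : σ →₀ ℕ) : MvPolynomial σ A :=
  if h : ∃ j, d ≤ α j then
    MvPolynomial.monomial (α - Finsupp.single h.choose d) 1 * P h.choose
  else MvPolynomial.monomial α 1 * l

/-- The Macaulay matrix of the `P j` (of degree `d`) and `l` (of degree `1`) in degree at most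
`N`. -/
noncomputable def macaulay (d N : ℕ) (P : σ → MvPolynomial σ A) (l : MvPolynomial σ A) :
    Matrix (MacIndex σ N) (MacIndex σ N) A :=
  fun α β => (macRow d P l α).coeff β

theorem macaulay_map (d N : ℕ) (P : σ → MvPolynomial σ A) (l : MvPolynomial σ A) (φ : A →+* B) :
    (macaulay d N P l).map φ =
      macaulay d N (fun j => MvPolynomial.map φ (P j)) (MvPolynomial.map φ l) := by
  ext α β
  simp only [macaulay, Matrix.map_apply, ← MvPolynomial.coeff_map]
  congr 1
  unfold macRow
  split_ifs <;> simp

open Classical in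
theorem macaulay_X_pow (d N : ℕ) :
    macaulay (A := A) (σ := σ) d N (fun j => MvPolynomial.X j ^ d) 1 = 1 := by
  have h1 : ∀ α : σ →₀ ℕ, macRow (A := A) d (fun j => MvPolynomial.X j ^ d) 1 α =
      MvPolynomial.monomial α 1 := by
    intro α
    unfold macRow
    split_ifs with h
    · beta_reduce
      rw [MvPolynomial.X_pow_eq_monomial, MvPolynomial.monomial_mul, mul_one,
        tsub_add_cancel_of_le (Finsupp.single_le_iff.2 h.choose_spec)]
    · rw [mul_one]
  ext α β
  simp only [macaulay, h1, MvPolynomial.coeff_monomial, Matrix.one_apply, Subtype.ext_iff]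

/-- This is where `N > n (d - 1)` enters, `n` being the number of variables: the multipliers of
`l` have degree at most `n (d - 1)`. -/
theorem macRow_degree [Fintype σ] (d N : ℕ) (hN : Fintype.card σ * (d - 1) + 1 ≤ N)
    (P : σ → MvPolynomial σ A) (l : MvPolynomial σ A)
    (hP : ∀ j, (P j).totalDegree ≤ d) (hl : l.totalDegree ≤ 1) (α : σ →₀ ℕ) (hα : α.degree ≤ N) :
    (macRow d P l α).totalDegree ≤ N := by
  unfold macRow
  split_ifs with h
  · refine (MvPolynomial.totalDegree_mul _ _).trans ?_
    have h1 := MvPolynomial.totalDegree_monomial_le (α - Finsupp.single h.choose d) (1 : A)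
    have h2 : (α - Finsupp.single h.choose d).degree + d = α.degree := by
      conv_rhs => rw [← tsub_add_cancel_of_le (Finsupp.single_le_iff.2 h.choose_spec)]
      rw [map_add, Finsupp.degree_single]
    have h3 := hP h.choose
    change _ ≤ Finsupp.degree _ at h1
    omega
  · refine (MvPolynomial.totalDegree_mul _ _).trans ?_
    have h1 := MvPolynomial.totalDegree_monomial_le α (1 : A)
    have h2 : α.degree ≤ Fintype.card σ * (d - 1) := by
      push Not at h
      rw [Finsupp.degree_eq_sum, ← smul_eq_mul, ← Finset.card_univ]
      exact Finset.sum_le_card_nsmul _ _ _ fun i _ => by have := h i; omega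
    change _ ≤ Finsupp.degree _ at h1
    omega

open Classical in
/-- At a common zero of the `P j` and `l` the vector of monomials is in the kernel, and its entry
at the monomial `1` is `1`. -/
theorem det_macaulay_eq_zero [Fintype σ] (d N : ℕ) (hN : Fintype.card σ * (d - 1) + 1 ≤ N)
    (P : σ → MvPolynomial σ A) (l : MvPolynomial σ A)
    (hP : ∀ j, (P j).totalDegree ≤ d) (hl : l.totalDegree ≤ 1) (x : σ → A)
    (hxP : ∀ j, MvPolynomial.eval x (P j) = 0) (hxl : MvPolynomial.eval x l = 0) :
    (macaulay d N P l).det = 0 := by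
  let v : MacIndex σ N → A := fun β => ∏ i, x i ^ (β : σ →₀ ℕ) i
  have hv : (macaulay d N P l).mulVec v = 0 := by
    ext α
    have h1 : MvPolynomial.eval x (macRow d P l α) = 0 := by
      unfold macRow
      split_ifs <;> simp [hxP, hxl]
    rw [MvPolynomial.eval_eq'] at h1
    simp only [Matrix.mulVec, dotProduct, Pi.zero_apply]
    rw [← h1]
    simp only [macaulay, v]
    -- the monomials outside the index set do not occur in the row
    rw [Finset.sum_subset (s₁ := (macRow d P l α).support)
      (s₂ := Finset.univ.map (Function.Embedding.subtype fun β : σ →₀ ℕ => β.degree ≤ N))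
      (f := fun m => (macRow d P l α).coeff m * ∏ i, x i ^ m i), Finset.sum_map]
    · rfl
    · intro m hm
      have h2 := macRow_degree d N hN P l hP hl α α.2
      have h3 : m.degree ≤ _ := MvPolynomial.le_totalDegree hm
      simpa using h3.trans h2
    · intro m _ hm
      rw [MvPolynomial.notMem_support_iff.1 hm, zero_mul]
  have h2 : (macaulay d N P l).det • v = 0 := by
    rw [← Matrix.one_mulVec v, ← Matrix.smul_mulVec, ← Matrix.adjugate_mul,
      ← Matrix.mulVec_mulVec, hv, Matrix.mulVec_zero]
  have h3 := congrFun h2 ⟨0, by simp⟩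
  simpa [v] using h3

open Classical in
/-- Only the row of the monomial `1` is known to come from `l`, whence the single factor `b`. -/
theorem norm_det_macaulay_le [Finite σ] {ν : A → ℕ} (hν : IsSubmultNorm ν) (d N : ℕ) (hd : 1 ≤ d)
    (P : σ → MvPolynomial σ A) (l : MvPolynomial σ A) (a b : ℕ) (hP : ∀ j, mvNorm ν (P j) ≤ a)
    (hl : mvNorm ν l ≤ b) (hba : b ≤ a) :
    ν (macaulay d N P l).det ≤ a ^ (Fintype.card (MacIndex σ N) - 1) * b := by
  have hrow : ∀ α, ∑ β, ν (macaulay d N P l α β) ≤ mvNorm ν (macRow d P l α) := by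
    intro α
    have := hν.sum_coeff_le_mvNorm (macRow d P l α)
      (Finset.univ.map (Function.Embedding.subtype fun β : σ →₀ ℕ => β.degree ≤ N))
    rwa [Finset.sum_map] at this
  have hmul : ∀ γ p, mvNorm ν (MvPolynomial.monomial γ 1 * p : MvPolynomial σ A) ≤ mvNorm ν p := by
    intro γ p
    refine (hν.mv.mul _ _).trans ?_
    have := (IsSubmultNorm.mvNorm_monomial (N := ν) γ 1).trans hν.one
    nlinarith
  refine (hν.det_le _).trans ?_
  rw [← Finset.prod_erase_mul _ _ (Finset.mem_univ ⟨0, by simp⟩)]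
  refine Nat.mul_le_mul ?_ ?_
  · refine (Finset.prod_le_pow_card _ _ a fun α _ => (hrow α).trans ?_).trans ?_
    · unfold macRow
      split_ifs
      · exact (hmul _ _).trans (hP _)
      · exact (hmul _ _).trans (hl.trans hba)
    · rw [Finset.card_erase_of_mem (Finset.mem_univ _), Finset.card_univ]
  · refine (hrow _).trans ?_
    unfold macRow
    rw [dif_neg]
    · exact (hmul _ _).trans hl
    · simp; omega

end Macaulay

/-! ### Valuations and reduction modulo a prime -/

/-- Nullstellensatz over the algebraic closure of the prime field. -/
theorem exists_zero_of_span_ne_top {ι : Type*} {t p : ℕ} [Fact p.Prime]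
    (f : ι → MvPolynomial (Fin t) ℤ)
    (h : Ideal.span (Set.range fun i => MvPolynomial.map (Int.castRingHom (ZMod p)) (f i)) ≠ ⊤) :
    ∃ x : Fin t → AlgebraicClosure (ZMod p), ∀ i, MvPolynomial.aeval x (f i) = 0 := by
  set I := Ideal.span (Set.range fun i => MvPolynomial.map (Int.castRingHom (ZMod p)) (f i))
  have h1 : (MvPolynomial.zeroLocus (AlgebraicClosure (ZMod p)) I).Nonempty := by
    by_contra hne
    rw [Set.not_nonempty_iff_eq_empty] at hne
    have h2 := MvPolynomial.vanishingIdeal_zeroLocus_eq_radical (K := AlgebraicClosure (ZMod p)) I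
    rw [hne, MvPolynomial.vanishingIdeal_empty] at h2
    exact h (Ideal.radical_eq_top.1 h2.symm)
  obtain ⟨x, hx⟩ := h1
  refine ⟨x, fun i => ?_⟩
  have h3 := hx _ (Ideal.subset_span ⟨i, rfl⟩)
  rw [← h3, MvPolynomial.aeval_def, MvPolynomial.aeval_def, MvPolynomial.eval₂_map]
  congr 1

theorem exists_zero_of_charP {ι : Type*} {t p : ℕ} [Fact p.Prime]
    (f : ι → MvPolynomial (Fin t) ℤ) {κ : Type*} [Field κ] [CharP κ p] (x : Fin t → κ)
    (hx : ∀ i, MvPolynomial.aeval x (f i) = 0) :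
    ∃ x : Fin t → AlgebraicClosure (ZMod p), ∀ i, MvPolynomial.aeval x (f i) = 0 := by
  apply exists_zero_of_span_ne_top
  let := ZMod.algebra κ p
  intro h
  have h1 : Ideal.span (Set.range fun i => MvPolynomial.map (Int.castRingHom (ZMod p)) (f i)) ≤
      RingHom.ker (MvPolynomial.aeval (R := ZMod p) x) := by
    rw [Ideal.span_le]
    rintro _ ⟨i, rfl⟩
    rw [SetLike.mem_coe, RingHom.mem_ker, ← hx i, MvPolynomial.aeval_def, MvPolynomial.aeval_def,
      MvPolynomial.eval₂_map]
    congr 1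
    exact Subsingleton.elim _ _
  rw [h, top_le_iff] at h1
  exact RingHom.ker_ne_top _ h1

/-- A valuation ring of `K` whose maximal ideal contracts to `𝔭`. -/
theorem exists_dominating {A K : Type*} [CommRing A] [Field K] (ι : A →+* K)
    (hι : Function.Injective ι) (𝔭 : Ideal A) [𝔭.IsPrime] :
    ∃ (O : ValuationSubring K) (g : A →+* O), (∀ a, (g a : K) = ι a) ∧
      ∀ a, IsUnit (g a) ↔ a ∉ 𝔭 := by
  have hu : ∀ y : 𝔭.primeCompl, IsUnit (ι y) := by
    intro y
    rw [isUnit_iff_ne_zero, map_ne_zero_iff _ hι]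
    rintro h
    exact y.2 (h ▸ 𝔭.zero_mem)
  let F : Localization.AtPrime 𝔭 →+* K := IsLocalization.lift hu
  obtain ⟨O, h, hloc⟩ := IsLocalRing.exists_factor_valuationRing F
  refine ⟨O, (F.codRestrict O.toSubring h).comp (algebraMap A _), ?_, ?_⟩
  · intro a
    exact IsLocalization.lift_eq hu a
  · intro a
    rw [← Ideal.mem_primeCompl_iff,
      ← IsLocalization.AtPrime.isUnit_to_map_iff (Localization.AtPrime 𝔭) 𝔭 a]
    exact ⟨fun ha => hloc.map_nonunit _ ha, fun ha => ha.map (F.codRestrict O.toSubring h)⟩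

/-- A polynomial over `O[V]` whose leading coefficient is nonzero modulo the maximal ideal and
which has the generic linear form `-∑ j, ξ j * w j` as a root forces every `ξ j` to lie in `O`. In
a valuation ring `O'` of `F(V)` above the Gauss localisation of `O[V]` the linear form is
integral; dividing it by a coefficient `ξ m` of largest value gives a unit of `O'`, so `(ξ m)⁻¹`
is a unit too. -/
theorem mem_of_root {F : Type*} [Field F] (O : ValuationSubring F) {σ V : Type*} [Fintype σ]
    (w : σ → V) (hw : Function.Injective w) (ξ : σ → F) (C : Polynomial (MvPolynomial V O))
    (hm : ∃ m, IsUnit (C.leadingCoeff.coeff m))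
    (hroot : C.eval₂ (MvPolynomial.map O.subtype)
      (-∑ j, MvPolynomial.C (ξ j) * MvPolynomial.X (w j)) = 0) (j : σ) : ξ j ∈ O := by
  classical
  let K := FractionRing (MvPolynomial V F)
  let 𝔪 : Ideal (MvPolynomial V O) := RingHom.ker (MvPolynomial.map (IsLocalRing.residue O))
  have h𝔪 : 𝔪.IsPrime := RingHom.ker_isPrime _
  let j₀ : MvPolynomial V F →+* K := algebraMap _ _
  have hj₀ : Function.Injective j₀ := IsFractionRing.injective _ _
  let ι : MvPolynomial V O →+* K := j₀.comp (MvPolynomial.map O.subtype)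
  have hι : Function.Injective ι :=
    hj₀.comp (MvPolynomial.map_injective _ Subtype.val_injective)
  obtain ⟨O', g, hg, hgu⟩ := exists_dominating ι hι 𝔪
  have hmem : ∀ a, a ∈ 𝔪 ↔ ∀ m, ¬ IsUnit (a.coeff m) := by
    intro a
    rw [RingHom.mem_ker, MvPolynomial.ext_iff]
    simp [MvPolynomial.coeff_map, IsLocalRing.residue_eq_zero_iff]
  let η : MvPolynomial V F := -∑ j, MvPolynomial.C (ξ j) * MvPolynomial.X (w j)
  have hη : j₀ η ∈ O' := by
    have hlc : IsUnit (g C.leadingCoeff) := by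
      rw [hgu, hmem]
      push Not
      exact hm
    have hlc0 : g C.leadingCoeff ≠ 0 := hlc.ne_zero
    have hroot' : Polynomial.aeval (j₀ η) (C.map g) = 0 := by
      rw [Polynomial.aeval_def, Polynomial.eval₂_map,
        show (algebraMap O' K).comp g = ι from RingHom.ext hg, ← Polynomial.hom_eval₂, hroot,
        map_zero]
    have hint := isIntegral_leadingCoeff_smul _ _ hroot'
    rw [Polynomial.leadingCoeff_map_of_leadingCoeff_ne_zero _ hlc0] at hint
    obtain ⟨y, hy⟩ := IsIntegrallyClosed.isIntegral_iff.1 hint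
    obtain ⟨u, hu⟩ := hlc
    rw [← hu] at hy
    have : j₀ η = algebraMap O' K (↑u⁻¹ * y) := by
      rw [map_mul, hy, Algebra.smul_def, ← mul_assoc, ← map_mul, Units.inv_mul, map_one, one_mul]
    rw [this]
    exact (↑u⁻¹ * y : O').2
  by_contra hj
  -- the coordinate of largest value
  obtain ⟨m, -, hmax⟩ := Finset.exists_max_image Finset.univ (fun j => O.valuation (ξ j))
    ⟨j, Finset.mem_univ j⟩
  have hξm : 1 < O.valuation (ξ m) := by
    rw [← O.valuation_le_one_iff, not_le] at hj
    exact hj.trans_le (hmax j (Finset.mem_univ j))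
  have hξm0 : ξ m ≠ 0 := by
    rintro h
    simp [h] at hξm
  have hdiv : ∀ i, ξ i * (ξ m)⁻¹ ∈ O := by
    intro i
    rw [← O.valuation_le_one_iff, map_mul, map_inv₀]
    exact mul_inv_le_one_of_le₀ (hmax i (Finset.mem_univ i)) zero_le
  have hinv : (ξ m)⁻¹ ∈ O := by
    rw [← O.valuation_le_one_iff, map_inv₀]
    exact inv_le_one_of_one_le₀ hξm.le
  let b : MvPolynomial V O := MvPolynomial.C ⟨_, hinv⟩
  let a : MvPolynomial V O := -∑ i, MvPolynomial.C ⟨_, hdiv i⟩ * MvPolynomial.X (w i)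
  have hab : g a = g b * ⟨_, hη⟩ := by
    apply Subtype.ext
    change (g a : K) = (g b : K) * j₀ η
    rw [hg, hg]
    simp only [ι, RingHom.comp_apply, ← map_mul]
    congr 1
    simp only [a, b, η, map_neg, map_sum, map_mul, MvPolynomial.map_C, MvPolynomial.map_X,
      mul_neg, Finset.mul_sum]
    congr 1
    refine Finset.sum_congr rfl fun i _ => ?_
    change MvPolynomial.C (ξ i * (ξ m)⁻¹) * _ = MvPolynomial.C (ξ m)⁻¹ * _
    rw [← mul_assoc, ← map_mul, mul_comm (ξ i)]
  have ha : IsUnit (g a) := by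
    rw [hgu, hmem]
    push Not
    refine ⟨Finsupp.single (w m) 1, ?_⟩
    have hcoef : a.coeff (Finsupp.single (w m) 1) = -⟨_, hdiv m⟩ := by
      simp only [a, MvPolynomial.coeff_neg, MvPolynomial.coeff_sum, MvPolynomial.coeff_C_mul,
        MvPolynomial.coeff_X, Finsupp.single_left_inj one_ne_zero, hw.eq_iff, mul_ite, mul_one,
        mul_zero, Finset.sum_ite_eq', Finset.mem_univ, if_true]
    rw [hcoef, IsUnit.neg_iff]
    convert isUnit_one
    exact mul_inv_cancel₀ hξm0
  rw [hab] at ha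
  have hb := isUnit_of_mul_isUnit_left ha
  rw [hgu, hmem] at hb
  push Not at hb
  obtain ⟨k, hk⟩ := hb
  have hk' : IsUnit (⟨_, hinv⟩ : O) := by
    simp only [b, MvPolynomial.coeff_C] at hk
    split_ifs at hk
    · exact hk
    · simp at hk
  rw [O.valuation_eq_one_iff] at hk'
  simp only [map_inv₀, inv_eq_one] at hk'
  exact hξm.ne' hk'

/-- A common zero with coordinates in `O` reduces to one over the residue field, of characteristic
`p`. -/
theorem exists_zero_of_mem_valuationSubring {ι : Type*} {t p : ℕ} [Fact p.Prime]
    (f : ι → MvPolynomial (Fin t) ℤ) {F : Type*} [Field F] (O : ValuationSubring F)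
    (hp : ¬ IsUnit (p : O)) (ξ : Fin t → F) (hξ : ∀ j, ξ j ∈ O)
    (hf : ∀ i, MvPolynomial.aeval ξ (f i) = 0) :
    ∃ x : Fin t → AlgebraicClosure (ZMod p), ∀ i, MvPolynomial.aeval x (f i) = 0 := by
  have hchar : CharP (IsLocalRing.ResidueField O) p := by
    refine ringChar.of_eq (CharP.ringChar_of_prime_eq_zero (Fact.out : p.Prime) ?_)
    rw [← map_natCast (IsLocalRing.residue O), IsLocalRing.residue_eq_zero_iff]
    exact hp
  let ξ' : Fin t → O := fun j => ⟨ξ j, hξ j⟩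
  refine exists_zero_of_charP f (fun j => IsLocalRing.residue O (ξ' j)) fun i => ?_
  have h0 : MvPolynomial.aeval ξ' (f i) = 0 := by
    apply Subtype.val_injective
    change O.subtype.toIntAlgHom _ = 0
    rw [← hf i, MvPolynomial.comp_aeval_apply]
    rfl
  have h1 := MvPolynomial.comp_aeval_apply ξ' (IsLocalRing.residue O).toIntAlgHom (f i)
  rw [h0, map_zero] at h1
  exact h1.symm

/-! ### A component of the deformed system through a given zero -/

/-- The polynomial ring over `F` in `X none` (a deformation parameter `ε`), the unknowns
`X (some j)`, and, inside the coefficient ring, the parameters `u j` (`Sum.inl j`) and `w j`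
(`Sum.inr j`). -/
abbrev KrullRing (σ F : Type*) [CommRing F] := MvPolynomial (Option σ) (MvPolynomial (σ ⊕ σ) F)

/-- Every prime ideal is the kernel of a map to a field. -/
theorem exists_field_hom {A : Type} [CommRing A] (𝔮 : Ideal A) [𝔮.IsPrime] :
    ∃ (K : Type) (_ : Field K) (π : A →+* K), ∀ a, π a = 0 ↔ a ∈ 𝔮 :=
  ⟨𝔮.ResidueField, inferInstance, algebraMap A _, fun _ =>
    Ideal.algebraMap_residueField_eq_zero⟩

section Krull

variable {σ F : Type} [Field F]

open MvPolynomial in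
/-- The involution exchanging the unknowns `X (some j)` with the parameters `u j`. -/
noncomputable def krullSwapHom (σ F : Type) [Field F] : KrullRing σ F →+* KrullRing σ F :=
  eval₂Hom (eval₂Hom (C.comp C)
    (Sum.elim (fun j => X (some j)) (fun j => C (X (Sum.inr j)))))
    (fun o => o.elim (X none) fun j => C (X (Sum.inl j)))

open MvPolynomial in
theorem krullSwapHom_comp :
    (krullSwapHom σ F).comp (krullSwapHom σ F) = RingHom.id _ := by
  apply MvPolynomial.ringHom_ext'
  · apply MvPolynomial.ringHom_ext'
    · ext a; simp [krullSwapHom]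
    · rintro (j | j) <;> simp [krullSwapHom]
  · rintro (_ | j) <;> simp [krullSwapHom]

/-- `krullSwapHom` as an automorphism; it presents `KrullRing` as a polynomial ring in `ε` and the
`u j`. -/
noncomputable def krullSwap (σ F : Type) [Field F] : KrullRing σ F ≃+* KrullRing σ F :=
  RingEquiv.ofRingHom (krullSwapHom σ F) (krullSwapHom σ F) krullSwapHom_comp krullSwapHom_comp

open MvPolynomial in
/-- The embedding of polynomials in the unknowns. -/
noncomputable def inX (σ F : Type) [Field F] : MvPolynomial σ F →+* KrullRing σ F :=
  eval₂Hom (C.comp C) fun j => X (some j)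

open MvPolynomial in
/-- The deformed equation `ε x_j ^ d + ∑ i, u_j ^ (i + 1) f_i`. -/
noncomputable def krullP {s : ℕ} (d : ℕ) (f : Fin s → MvPolynomial σ F) (j : σ) : KrullRing σ F :=
  X none * X (some j) ^ d + ∑ i : Fin s, C (X (Sum.inl j)) ^ ((i : ℕ) + 1) * inX σ F (f i)

open MvPolynomial in
/-- The specialisation of `ε` to `0` and of the unknowns to `ξ`, keeping the parameters. -/
noncomputable def krullEv (ξ : σ → F) : KrullRing σ F →+* MvPolynomial (σ ⊕ σ) F :=
  eval₂Hom (RingHom.id _) fun o => o.elim 0 fun j => C (ξ j)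

open MvPolynomial in
theorem krullEv_inX (ξ : σ → F) (g : MvPolynomial σ F) :
    krullEv ξ (inX σ F g) = C (eval ξ g) := by
  have : (krullEv ξ).comp (inX σ F) = C.comp (eval ξ) := by
    apply MvPolynomial.ringHom_ext' <;> intros <;> ext <;> simp [krullEv, inX]
  exact RingHom.congr_fun this g

open MvPolynomial in
/-- Some irreducible component of the variety of the deformed equations contains the point
`(ε, x) = (0, ξ)` and is not contained in `ε = 0`. By Krull's height theorem the components have
codimension at most `n`. If `ε` vanished on one, then either all `f i` vanish on it, so that its
points have `x = ξ` by the algebraicity hypothesis `halg`, or some `f i` does not, and then every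
`u j` is algebraic over the other variables. Both times the codimension would be at least `n + 1`.
-/
theorem exists_krull_prime [Fintype σ] {s d : ℕ} (f : Fin s → MvPolynomial σ F) (ξ : σ → F)
    (hξ : ∀ i, eval ξ (f i) = 0)
    (halg : ∀ (K : Type) [Field K] (ψ : F →+* K) (x : σ → K), (∀ i, eval₂ ψ x (f i) = 0) →
      ∀ j, ∃ q : Polynomial F, q ≠ 0 ∧ q.eval₂ ψ (x j) = 0) :
    ∃ 𝔮 : Ideal (KrullRing σ F), 𝔮.IsPrime ∧ (∀ j, krullP d f j ∈ 𝔮) ∧ X none ∉ 𝔮 ∧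
      𝔮 ≤ RingHom.ker (krullEv ξ) := by
  classical
  have hprime : (RingHom.ker (krullEv ξ)).IsPrime := RingHom.ker_isPrime _
  let I : Ideal (KrullRing σ F) := Ideal.span (Set.range (krullP d f))
  have hI : I ≤ RingHom.ker (krullEv ξ) := by
    rw [Ideal.span_le]
    rintro _ ⟨j, rfl⟩
    rw [SetLike.mem_coe, RingHom.mem_ker]
    simp only [krullP, map_add, map_sum, map_mul, krullEv_inX, hξ, map_zero, mul_zero,
      Finset.sum_const_zero, add_zero]
    simp [krullEv]
  obtain ⟨𝔮, h𝔮, hle⟩ := Ideal.exists_minimalPrimes_le hI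
  have hq : 𝔮.IsPrime := h𝔮.1.1
  have hmem : ∀ j, krullP d f j ∈ 𝔮 := fun j => h𝔮.1.2 (Ideal.subset_span ⟨j, rfl⟩)
  have hht : 𝔮.height ≤ Fintype.card σ := by
    refine (Ideal.height_le_card_of_mem_minimalPrimes_span (Set.finite_range _) h𝔮).trans ?_
    have := Set.ncard_image_le (f := krullP d f) (Set.finite_univ (α := σ))
    rw [Set.image_univ, Set.ncard_univ, Nat.card_eq_fintype_card] at this
    exact_mod_cast this
  have hcontra : ¬ (Nat.card (Option σ) : ℕ∞) ≤ 𝔮.height := by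
    intro h
    have := h.trans hht
    rw [Nat.card_eq_fintype_card, Fintype.card_option] at this
    norm_cast at this
    omega
  refine ⟨𝔮, hq, hmem, fun hε => ?_, hle⟩
  have hone : ∀ (e : KrullRing σ F ≃+* KrullRing σ F), e (C (1 : MvPolynomial (σ ⊕ σ) F)) ∉ 𝔮 := by
    intro e
    rw [map_one, map_one]
    exact fun h => hq.ne_top ((Ideal.eq_top_iff_one _).2 h)
  have hsum : ∀ j, ∑ i : Fin s, C (X (Sum.inl j)) ^ ((i : ℕ) + 1) * inX σ F (f i) ∈ 𝔮 := fun j =>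
    (Ideal.add_mem_iff_right _ (Ideal.mul_mem_right _ _ hε)).1 (hmem j)
  by_cases hf : ∀ i, inX σ F (f i) ∈ 𝔮
  · -- the coordinates are algebraic modulo the prime, hence constant
    obtain ⟨K, _, π, hπ⟩ := exists_field_hom 𝔮
    have hx := halg K (π.comp (C.comp C)) (fun j => π (X (some j))) (by
      intro i
      rw [← hom_eval₂]
      exact (hπ _).2 (hf i))
    refine hcontra (card_le_height (RingEquiv.refl _) 𝔮 ?_)
    rintro (_ | j)
    · exact ⟨Polynomial.X, ⟨1, by simpa using hone (RingEquiv.refl _)⟩, by simpa using hε⟩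
    · refine ⟨Polynomial.X - Polynomial.C (C (ξ j)), ⟨1, ?_⟩, ?_⟩
      · simpa [Polynomial.coeff_C] using hone (RingEquiv.refl _)
      · obtain ⟨q, hq0, hqj⟩ := hx j
        obtain ⟨q₂, hq₂, hndvd⟩ :=
          Polynomial.exists_eq_pow_rootMultiplicity_mul_and_not_dvd q hq0 (ξ j)
        rw [← Polynomial.hom_eval₂, hπ, hq₂, Polynomial.eval₂_mul, Polynomial.eval₂_pow] at hqj
        have hnot : q₂.eval₂ (C.comp C) (X (some j)) ∉ 𝔮 := by
          intro h
          have h2 := hle h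
          rw [RingHom.mem_ker, Polynomial.hom_eval₂] at h2
          have h3 : krullEv ξ (X (some j)) = C (ξ j) := by simp [krullEv]
          have h4 : (krullEv ξ).comp (C.comp C) = C := by ext; simp [krullEv]
          rw [h3, h4, Polynomial.eval₂_at_apply, map_eq_zero_iff _ (C_injective _ _)] at h2
          exact hndvd (Polynomial.dvd_iff_isRoot.2 h2)
        have h5 := hq.mem_of_pow_mem _ ((hq.mem_or_mem hqj).resolve_right hnot)
        simpa using h5
  · push Not at hf
    obtain ⟨i₀, hi₀⟩ := hf
    refine hcontra (card_le_height (krullSwap σ F) 𝔮 ?_)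
    rintro (_ | j)
    · refine ⟨Polynomial.X, ⟨1, by simpa using hone (krullSwap σ F)⟩, ?_⟩
      simpa [krullSwap, krullSwapHom] using hε
    · have hC : ∀ i, krullSwap σ F (C (rename Sum.inl (f i))) = inX σ F (f i) := by
        intro i
        have : ((krullSwap σ F : KrullRing σ F →+* KrullRing σ F).comp C).comp
            (rename Sum.inl : MvPolynomial σ F →ₐ[F] _).toRingHom = inX σ F := by
          apply MvPolynomial.ringHom_ext' <;> intros <;> ext <;>
            simp [krullSwap, krullSwapHom, inX]
        exact RingHom.congr_fun this (f i)
      refine ⟨∑ i : Fin s, Polynomial.C (rename Sum.inl (f i)) * Polynomial.X ^ ((i : ℕ) + 1),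
        ⟨i₀ + 1, ?_⟩, ?_⟩
      · simpa [Polynomial.finsetSum_coeff, Fin.val_inj, Finset.sum_ite_eq', hC] using hi₀
      · convert hsum j using 1
        simp only [map_sum, map_mul, Polynomial.aeval_C, map_pow, Polynomial.aeval_X]
        refine Finset.sum_congr rfl fun i _ => ?_
        rw [MvPolynomial.algebraMap_eq, hC, mul_comm]
        simp [krullSwap, krullSwapHom]

end Krull

/-! ### The Macaulay determinant of the deformed system -/

section Pencil

variable {σ A B : Type*} [Fintype σ] [CommRing A] [CommRing B] {s : ℕ}

open MvPolynomial in
/-- The deformed equation `E x_j ^ d + ∑ i, u_j ^ (i + 1) f_i` with parameters in the base ring.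
-/
noncomputable def penP (d : ℕ) (E : A) (u : σ → A) (f : Fin s → MvPolynomial σ A) (j : σ) :
    MvPolynomial σ A :=
  C E * X j ^ d + ∑ i : Fin s, C (u j) ^ ((i : ℕ) + 1) * f i

open MvPolynomial in
/-- The linear form `W + ∑ j, w_j x_j`. -/
noncomputable def penL (W : A) (w : σ → A) : MvPolynomial σ A :=
  C W + ∑ j, C (w j) * X j

open Classical in
/-- The Macaulay determinant of the deformed equations and the linear form. -/
noncomputable def penDet (d N : ℕ) (E W : A) (u w : σ → A) (f : Fin s → MvPolynomial σ A) : A :=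
  (macaulay d N (penP d E u f) (penL W w)).det

open MvPolynomial in
theorem map_penDet (d N : ℕ) (E W : A) (u w : σ → A) (f : Fin s → MvPolynomial σ A)
    (φ : A →+* B) : φ (penDet d N E W u w f) =
      penDet d N (φ E) (φ W) (fun j => φ (u j)) (fun j => φ (w j)) fun i => map φ (f i) := by
  classical
  rw [penDet, penDet, RingHom.map_det, RingHom.mapMatrix_apply, macaulay_map]
  congr 2
  · funext j
    simp [penP]
  · simp [penL]

/-- For `E = W = 1` and `u = w = 0` the Macaulay matrix is the identity. -/
theorem penDet_one (d N : ℕ) (f : Fin s → MvPolynomial σ A) : penDet d N 1 1 0 0 f = 1 := by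
  classical
  have h1 : penP d 1 0 f = fun j => MvPolynomial.X j ^ d := by
    funext j
    simp [penP]
  have h2 : penL (1 : A) (0 : σ → A) = 1 := by
    simp [penL]
  rw [penDet, h1, h2, macaulay_X_pow, Matrix.det_one]

open MvPolynomial in
theorem penDet_eq_zero (d N : ℕ) (hN : Fintype.card σ * (d - 1) + 1 ≤ N) (E W : A) (u w : σ → A)
    (f : Fin s → MvPolynomial σ A) (hf : ∀ i, (f i).totalDegree ≤ d) (x : σ → A)
    (hx : ∀ j, eval x (penP d E u f j) = 0) (hW : eval x (penL W w) = 0) :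
    penDet d N E W u w f = 0 := by
  refine det_macaulay_eq_zero d N hN _ _ (fun j => ?_) ?_ x hx hW
  · refine (totalDegree_add _ _).trans (max_le ?_ ?_)
    · refine (totalDegree_mul _ _).trans ?_
      rw [totalDegree_C, zero_add, X_pow_eq_monomial]
      exact (totalDegree_monomial_le _ _).trans (by simp)
    · refine totalDegree_finsetSum_le fun i _ => ?_
      refine (totalDegree_mul _ _).trans ?_
      rw [← map_pow, totalDegree_C, zero_add]
      exact hf i
  · refine (totalDegree_add _ _).trans (max_le ?_ ?_)
    · rw [totalDegree_C]
      exact zero_le_one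
    · refine totalDegree_finsetSum_le fun i _ => ?_
      refine (totalDegree_mul _ _).trans ?_
      rw [totalDegree_C, zero_add, X]
      exact (totalDegree_monomial_le _ _).trans (by simp)

theorem norm_penDet_le {ν : A → ℕ} (hν : IsSubmultNorm ν) (d N : ℕ) (hd : 1 ≤ d)
    (E W : A) (u w : σ → A) (f : Fin s → MvPolynomial σ A) (hE : ν E ≤ 1) (hW : ν W ≤ 1)
    (hu : ∀ j, ν (u j) ≤ 1) (hw : ∀ j, ν (w j) ≤ 1) (a : ℕ)
    (ha : 1 + ∑ i, mvNorm ν (f i) ≤ a) (ha' : 1 + Fintype.card σ ≤ a) :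
    ν (penDet d N E W u w f) ≤
      a ^ (Fintype.card (MacIndex σ N) - 1) * (1 + Fintype.card σ) := by
  have hC : ∀ b : A, ν b ≤ 1 → mvNorm ν (MvPolynomial.C b : MvPolynomial σ A) ≤ 1 :=
    fun b hb => IsSubmultNorm.mvNorm_C b |>.trans hb
  have hmul : ∀ b c : MvPolynomial σ A, mvNorm ν b ≤ 1 → mvNorm ν (b * c) ≤ mvNorm ν c :=
    fun b c hb => (hν.mv.mul _ _).trans (by nlinarith)
  refine norm_det_macaulay_le hν d N hd _ _ a _ (fun j => ?_) ?_ ha'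
  · refine (hν.mv.add _ _).trans (le_trans (add_le_add ?_ ?_) ha)
    · exact (hmul _ _ (hC _ hE)).trans (hν.mv.pow_le_one (hν.mvNorm_X j) d)
    · exact (hν.mv.sum _ _).trans (Finset.sum_le_sum fun i _ =>
        hmul _ _ (hν.mv.pow_le_one (hC _ (hu j)) _))
  · refine (hν.mv.add _ _).trans (add_le_add (hC _ hW) ?_)
    refine (hν.mv.sum _ _).trans ((Finset.sum_le_card_nsmul _ _ 1 fun j _ => ?_).trans ?_)
    · exact (hmul _ _ (hC _ (hw j))).trans (hν.mvNorm_X j)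
    · simp

end Pencil

/-! ### The generic determinant -/

section Generic

variable {σ A : Type} [Fintype σ] [CommRing A] {s : ℕ}

/-- Polynomials in `E` (outer variable), `W` (inner variable), and `u j`, `w j` (`Sum.inl j`,
`Sum.inr j`). -/
abbrev GenRing (σ A : Type) [CommRing A] := Polynomial (Polynomial (MvPolynomial (σ ⊕ σ) A))

/-- The inclusion of the polynomials in the `u j` and `w j`. -/
noncomputable def uwEmb (σ A : Type) [CommRing A] : MvPolynomial (σ ⊕ σ) A →+* GenRing σ A :=
  Polynomial.C.comp Polynomial.C

open MvPolynomial in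
/-- The determinant `penDet` with indeterminate parameters `E`, `W`, `u`, `w`. -/
noncomputable def genDet (d N : ℕ) (f : Fin s → MvPolynomial σ A) : GenRing σ A :=
  penDet d N Polynomial.X (Polynomial.C Polynomial.X) (fun j => uwEmb σ A (X (Sum.inl j)))
    (fun j => uwEmb σ A (X (Sum.inr j))) fun i => map ((uwEmb σ A).comp C) (f i)

open MvPolynomial in
theorem genDet_ne_zero [Nontrivial A] (d N : ℕ) (f : Fin s → MvPolynomial σ A) :
    genDet d N f ≠ 0 := by
  let φ : GenRing σ A →+* A :=
    Polynomial.eval₂RingHom (Polynomial.eval₂RingHom (eval 0) 1) 1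
  have hφ : ∀ v, φ (uwEmb σ A (X v)) = 0 := by
    intro a
    simp [φ, uwEmb]
  have h2 : φ (genDet d N f) = 1 := by
    refine (map_penDet (σ := σ) (A := GenRing σ A) d N _ _ _ _ _ φ).trans ?_
    simp only [hφ]
    simp only [φ, Polynomial.coe_eval₂RingHom, Polynomial.eval₂_X, Polynomial.eval₂_C]
    exact penDet_one d N _
  intro h
  rw [h, map_zero] at h2
  exact zero_ne_one h2

open MvPolynomial in
/-- The lowest coefficient of `genDet` with respect to `E` vanishes at `W = -∑ j, ξ j * w j`. The
determinant itself vanishes on the component found in `exists_krull_prime`; on this component `E`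
is not identically zero, so the power of `E` in the determinant may be cancelled before
specialising to `E = 0`, `x = ξ`. -/
theorem genDet_root (d N : ℕ) (hN : Fintype.card σ * (d - 1) + 1 ≤ N)
    (f : Fin s → MvPolynomial σ A)
    (hf : ∀ i, (f i).totalDegree ≤ d) {F : Type} [Field F] (θ : A →+* F)
    (ξ : σ → F) (hξ : ∀ i, eval₂ θ ξ (f i) = 0)
    (halg : ∀ (K : Type) [Field K] (ψ : F →+* K) (x : σ → K),
      (∀ i, eval₂ (ψ.comp θ) x (f i) = 0) →
      ∀ j, ∃ q : Polynomial F, q ≠ 0 ∧ q.eval₂ ψ (x j) = 0) :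
    (genDet d N f).trailingCoeff.eval₂ (map θ)
      (-∑ j, C (ξ j) * X (Sum.inr j)) = 0 := by
  classical
  obtain ⟨𝔮, hq, hP, hε, hle⟩ := exists_krull_prime (d := d) (fun i => map θ (f i)) ξ
    (fun i => by rw [eval_map]; exact hξ i)
    (fun K _ ψ x hx => halg K ψ x fun i => by rw [← hx i, eval₂_map])
  obtain ⟨K, _, π, hπ⟩ := exists_field_hom 𝔮
  let W₀ : KrullRing σ F := -∑ j, C (X (Sum.inr j)) * X (some j)
  let φ₀ : GenRing σ A →+* KrullRing σ F :=
    Polynomial.eval₂RingHom (Polynomial.eval₂RingHom (C.comp (map θ)) W₀) (X none)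
  have hφ₀ : ∀ a, φ₀ (uwEmb σ A a) = C (map θ a) := by
    intro a
    simp [φ₀, uwEmb]
  have hE : φ₀ Polynomial.X = X none := by simp [φ₀]
  have hW : φ₀ (Polynomial.C Polynomial.X) = W₀ := by simp [φ₀]
  have hdet : φ₀ (genDet d N f) ∈ 𝔮 := by
    rw [← hπ, ← RingHom.comp_apply]
    refine (map_penDet (σ := σ) (A := GenRing σ A) d N _ _ _ _ _ (π.comp φ₀)).trans ?_
    simp only [RingHom.comp_apply, hE, hW, hφ₀, map_X, map_map]
    refine penDet_eq_zero d N hN _ _ _ _ _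
      (fun i => (Finset.sup_mono (support_map_subset _ _)).trans (hf i))
      (fun j => π (X (some j))) (fun j => ?_) ?_
    · rw [← (hπ _).2 (hP j)]
      simp only [penP, krullP, inX, map_add, map_mul, map_sum, map_pow, eval_C, eval_X, eval_map,
        coe_eval₂Hom, hom_eval₂, eval₂_map]
      congr 1
      refine Finset.sum_congr rfl fun i _ => ?_
      congr 2
      ext a
      simp [hφ₀]
    · simp only [penL, map_add, map_mul, map_sum, eval_C, eval_X, W₀, map_neg]
      exact neg_add_cancel _
  obtain ⟨Δ', hΔ'⟩ : Polynomial.X ^ (genDet d N f).natTrailingDegree ∣ genDet d N f := by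
    rw [Polynomial.X_pow_dvd_iff]
    exact fun k hk => Polynomial.coeff_eq_zero_of_lt_natTrailingDegree hk
  have htc : (genDet d N f).trailingCoeff = Δ'.coeff 0 := by
    rw [Polynomial.trailingCoeff]
    generalize (genDet d N f).natTrailingDegree = n at *
    rw [hΔ']
    simpa using Polynomial.coeff_X_pow_mul Δ' n 0
  have hmem : φ₀ Δ' ∈ 𝔮 := by
    rw [hΔ', map_mul, map_pow, hE] at hdet
    exact (hq.mem_or_mem hdet).resolve_left fun h => hε (hq.mem_of_pow_mem _ h)
  have h0 : krullEv ξ (φ₀ Δ') = 0 := hle hmem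
  have hcomp : (krullEv ξ).comp φ₀ = Polynomial.eval₂RingHom (Polynomial.eval₂RingHom (map θ)
      (-∑ j, C (ξ j) * X (Sum.inr j))) 0 := by
    apply Polynomial.ringHom_ext'
    · apply Polynomial.ringHom_ext'
      · apply MvPolynomial.ringHom_ext' <;> intros <;> ext <;> simp [φ₀, krullEv]
      · simp [φ₀, W₀, krullEv, mul_comm]
    · simp [φ₀, krullEv]
  rw [← RingHom.comp_apply, hcomp, Polynomial.coe_eval₂RingHom, Polynomial.eval₂_at_zero] at h0
  rw [htc]
  exact h0

open MvPolynomial in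
/-- If one coefficient of the leading coefficient of `D` avoids the prime `𝔭`, then the root `ξ`
is finite at a valuation centred at `𝔭`. -/
theorem exists_good_valuation {p : ℕ} {F : Type} [Field F]
    (θ : A →+* F) (hθ : Function.Injective θ) (ξ : σ → F)
    (D : Polynomial (MvPolynomial (σ ⊕ σ) A))
    (hroot : D.eval₂ (map θ) (-∑ j, C (ξ j) * X (Sum.inr j)) = 0)
    (𝔭 : Ideal A) [𝔭.IsPrime] (hp : (p : A) ∈ 𝔭)
    (m : σ ⊕ σ →₀ ℕ) (hm : D.leadingCoeff.coeff m ∉ 𝔭) :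
    ∃ O : ValuationSubring F, ¬ IsUnit (p : O) ∧ (∀ a, θ a ∈ O) ∧ ∀ j, ξ j ∈ O := by
  obtain ⟨O, g, hg, hgu⟩ := exists_dominating θ hθ 𝔭
  have hunit : IsUnit (g (D.leadingCoeff.coeff m)) := (hgu _).2 hm
  refine ⟨O, ?_, fun a => hg a ▸ (g a).2, ?_⟩
  · rw [← map_natCast g, hgu, not_not]
    exact hp
  · have hlc : map g D.leadingCoeff ≠ 0 := by
      intro h
      have h2 := congrArg (coeff m) h
      rw [coeff_map, coeff_zero] at h2
      exact hunit.ne_zero h2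
    refine mem_of_root O Sum.inr Sum.inr_injective ξ (D.map (map g)) ⟨m, ?_⟩ ?_
    · rw [Polynomial.leadingCoeff_map_of_leadingCoeff_ne_zero _ hlc, coeff_map]
      exact hunit
    · rw [Polynomial.eval₂_map, ← hroot]
      congr 1
      have : (O.subtype.comp g) = θ := RingHom.ext hg
      rw [← this]
      apply MvPolynomial.ringHom_ext' <;> intros <;> ext <;> simp

theorem norm_coeff_genDet_le {ν : A → ℕ} (hν : IsSubmultNorm ν) (d N : ℕ) (hd : 1 ≤ d)
    (f : Fin s → MvPolynomial σ A) (a : ℕ) (ha : 1 + ∑ i, mvNorm ν (f i) ≤ a)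
    (ha' : 1 + Fintype.card σ ≤ a) (m : σ ⊕ σ →₀ ℕ) :
    ν ((genDet d N f).trailingCoeff.leadingCoeff.coeff m) ≤
      a ^ (Fintype.card (MacIndex σ N) - 1) * (1 + Fintype.card σ) := by
  have hν₁ : IsSubmultNorm (mvNorm ν : MvPolynomial (σ ⊕ σ) A → ℕ) := hν.mv
  have hν₂ := hν₁.poly
  have hν₃ := hν₂.poly
  have hemb : ∀ b, polyNorm (polyNorm (mvNorm ν)) (uwEmb σ A b) ≤ mvNorm ν b := fun b =>
    (IsSubmultNorm.polyNorm_C _).trans (IsSubmultNorm.polyNorm_C _)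
  refine (hν.coeff_le_mvNorm _ m).trans ((hν₁.coeff_le_polyNorm _ _).trans
    ((hν₂.coeff_le_polyNorm _ _).trans ?_))
  refine norm_penDet_le hν₃ d N hd _ _ _ _ _ hν₂.polyNorm_X
    ((IsSubmultNorm.polyNorm_C _).trans hν₁.polyNorm_X)
    (fun j => (hemb _).trans (hν.mvNorm_X _)) (fun j => (hemb _).trans (hν.mvNorm_X _)) a
    (le_trans ?_ ha) ha'
  gcongr with i
  unfold mvNorm
  refine (Finset.sum_le_sum_of_subset (MvPolynomial.support_map_subset _ _)).trans
    (Finset.sum_le_sum fun k _ => ?_)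
  rw [MvPolynomial.coeff_map]
  exact (hemb _).trans (IsSubmultNorm.mvNorm_C _)

end Generic

/-! ### Numerical estimates -/

section Numeric

theorem choose_add_mono {m n m' n' : ℕ} (hm : m ≤ m') (hn : n ≤ n') :
    (m + n).choose n ≤ (m' + n').choose n' := by
  refine (Nat.choose_le_choose n (Nat.add_le_add_right hm n)).trans ?_
  rw [← Nat.choose_symm_add, ← Nat.choose_symm_add]
  exact Nat.choose_le_choose _ (Nat.add_le_add_left hn _)

/-- Bernoulli's inequality, for the degree of the Macaulay matrix. -/
theorem macaulay_degree_le {d : ℕ} (hd : 1 ≤ d) (n : ℕ) : n * (d - 1) + 1 ≤ d ^ n := by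
  obtain ⟨e, rfl⟩ := Nat.exists_eq_add_of_le' hd
  rw [Nat.add_sub_cancel]
  induction n with
  | zero => simp
  | succ n ih =>
    have h1 : 1 ≤ (e + 1) ^ n := Nat.one_le_pow _ _ (Nat.succ_pos e)
    rw [pow_succ]
    nlinarith

theorem card_macIndex_le {σ : Type} [Fintype σ] {d t : ℕ} (hd : 1 ≤ d)
    (hσ : Fintype.card σ ≤ t) :
    Fintype.card (MacIndex σ (Fintype.card σ * (d - 1) + 1)) ≤ (d ^ t + t).choose t := by
  classical
  rw [← Finset.card_univ, ← Finset.card_map (Function.Embedding.subtype _)]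
  refine (card_degree_le (Fintype.card σ * (d - 1) + 1) _ fun α hα => ?_).trans
    (choose_add_mono ((macaulay_degree_le hd _).trans (Nat.pow_le_pow_right hd hσ)) hσ)
  obtain ⟨β, -, rfl⟩ := Finset.mem_map.1 hα
  exact β.2

/-- That is, `(1 + 1 / L) ^ k ≤ 2` for `k ≤ L / 2`. -/
theorem succ_pow_le {L k : ℕ} (h : 2 * k ≤ L) : (1 + L) ^ k ≤ 2 * L ^ k := by
  have h1 : (1 + L) ^ k * (L + 1 - k) ≤ L ^ k * (1 + L) := by
    clear h
    induction k with
    | zero => simp [add_comm]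
    | succ k ih =>
      calc (1 + L) ^ (k + 1) * (L + 1 - (k + 1)) = (1 + L) ^ k * ((1 + L) * (L - k)) := by
            rw [Nat.add_sub_add_right]; ring
        _ ≤ (1 + L) ^ k * (L * (L + 1 - k)) := by
            refine Nat.mul_le_mul_left _ ?_
            rcases le_total L k with hk | hk
            · simp [Nat.sub_eq_zero_of_le hk]
            · obtain ⟨c, rfl⟩ := Nat.exists_eq_add_of_le hk
              rw [show k + c - k = c by omega, show k + c + 1 - k = c + 1 by omega]
              nlinarith
        _ ≤ L ^ (k + 1) * (1 + L) := by
            rw [pow_succ]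
            nlinarith
  have h2 : (1 + L) ^ k * (1 + L) ≤ (2 * L ^ k) * (1 + L) :=
    calc (1 + L) ^ k * (1 + L) ≤ (1 + L) ^ k * (2 * (L + 1 - k)) := by
          gcongr
          omega
      _ ≤ _ := by nlinarith
  exact Nat.le_of_mul_le_mul_right h2 (by omega)

/-- The size `M` of the obstruction against the bound of the theorem: `M ≤ H ^ (R - 1) * L ^ R`
with `R ≤ L / 2`. -/
theorem two_mul_logb_le {H L R n M : ℕ} (hH : 1 ≤ H) (hR : 1 ≤ R) (hRL : 2 * R ≤ L)
    (hn : 2 * (1 + n) ≤ L) (hM0 : M ≠ 0) (hM : M ≤ (H * (1 + L)) ^ (R - 1) * (1 + n)) :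
    2 * Real.logb 2 M ≤ 2 * L * Real.logb 2 H + L * Real.logb 2 L := by
  obtain ⟨k, rfl⟩ := Nat.exists_eq_add_of_le' hR
  rw [Nat.add_sub_cancel] at hM
  have h1 : M ≤ H ^ k * L ^ (k + 1) := by
    calc M ≤ (H * (1 + L)) ^ k * (1 + n) := hM
      _ = H ^ k * (1 + L) ^ k * (1 + n) := by rw [mul_pow]
      _ ≤ H ^ k * (2 * L ^ k) * (1 + n) := by
          gcongr
          exact succ_pow_le (by omega)
      _ = H ^ k * L ^ k * (2 * (1 + n)) := by ring
      _ ≤ H ^ k * L ^ k * L := by gcongr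
      _ = _ := by ring
  have hHr : (1 : ℝ) ≤ H := by exact_mod_cast hH
  have hLr : (1 : ℝ) ≤ L := by exact_mod_cast (by omega : 1 ≤ L)
  have hlH : 0 ≤ Real.logb 2 H := Real.logb_nonneg one_lt_two hHr
  have hlL : 0 ≤ Real.logb 2 L := Real.logb_nonneg one_lt_two hLr
  have h2 : Real.logb 2 M ≤ k * Real.logb 2 H + (k + 1 : ℕ) * Real.logb 2 L := by
    rw [← Real.logb_pow, ← Real.logb_pow, ← Real.logb_mul (by positivity) (by positivity)]
    refine Real.logb_le_logb_of_le one_lt_two ?_ (by exact_mod_cast h1)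
    exact_mod_cast Nat.pos_of_ne_zero hM0
  have hRLr : (2 * (k + 1 : ℕ) : ℝ) ≤ L := by exact_mod_cast hRL
  push_cast at h2 hRLr
  nlinarith

end Numeric

/-! ### A single equation -/

section Single

open MvPolynomial in
/-- A single equation only has to remain nonconstant modulo `p`, so a prime not dividing some
coefficient of a nonconstant monomial will do. -/
theorem exists_prime_single {t H L : ℕ} (f : Fin 1 → MvPolynomial (Fin t) ℤ)
    (hdeg : ∀ i, 1 ≤ (f i).totalDegree) (hH : ∀ i m, |(f i).coeff m| ≤ (H : ℤ)) (hL : 1 ≤ L) :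
    ∃ p : ℕ, ∃ _ : Fact p.Prime,
      (p : ℝ) < 6 + 2 * L * Real.logb 2 H + L * Real.logb 2 L ∧
      ∃ x : Fin t → AlgebraicClosure (ZMod p), ∀ i, aeval x (f i) = 0 := by
  obtain ⟨m, hm, hm0⟩ : ∃ m, (f 0).coeff m ≠ 0 ∧ m ≠ 0 := by
    by_contra! hcon
    have h0 : (f 0).totalDegree ≤ 0 := by
      refine totalDegree_le_of_support_subset (q := (1 : MvPolynomial (Fin t) ℤ)) (fun m hm => ?_)
        |>.trans (by simp)
      rw [hcon m (mem_support_iff.1 hm)]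
      simp
    exact absurd (hdeg 0) (by omega)
  obtain ⟨p, hp, hdvd, hlt⟩ := exists_prime_not_dvd ((f 0).coeff m).natAbs (Int.natAbs_ne_zero.2 hm)
  have : Fact p.Prime := ⟨hp⟩
  refine ⟨p, this, hlt.trans_le ?_, exists_zero_of_span_ne_top f ?_⟩
  · have hcH : ((f 0).coeff m).natAbs ≤ H := by
      have h := hH 0 m
      rw [Int.abs_eq_natAbs] at h
      exact_mod_cast h
    have hc1 : 1 ≤ ((f 0).coeff m).natAbs := Nat.one_le_iff_ne_zero.2 (Int.natAbs_ne_zero.2 hm)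
    have h1 : Real.logb 2 ((f 0).coeff m).natAbs ≤ Real.logb 2 H :=
      Real.logb_le_logb_of_le one_lt_two (by exact_mod_cast hc1) (by exact_mod_cast hcH)
    have h0 : 0 ≤ Real.logb 2 H :=
      Real.logb_nonneg one_lt_two (by exact_mod_cast hc1.trans hcH)
    have hLr : (1 : ℝ) ≤ L := by exact_mod_cast hL
    have hlL : 0 ≤ Real.logb 2 L := Real.logb_nonneg one_lt_two hLr
    nlinarith
  · have hr : (Set.range fun i => map (Int.castRingHom (ZMod p)) (f i)) =
        {map (Int.castRingHom (ZMod p)) (f 0)} := by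
      rw [← Set.image_univ, Set.univ_unique]
      simp
    rw [hr, Ne, Ideal.span_singleton_eq_top]
    intro hu
    obtain ⟨c, -, hc⟩ := isUnit_iff_eq_C_of_isReduced.1 hu
    have h2 := congrArg (coeff m) hc
    rw [coeff_map, coeff_C, if_neg (Ne.symm hm0), eq_intCast, ZMod.intCast_zmod_eq_zero_iff_dvd _ p]
      at h2
    exact hdvd (Int.natCast_dvd.1 h2)

end Single

/-! ### Splitting off independent coordinates -/

section Split

open MvPolynomial

variable {s t : ℕ}

/-- A common zero `ξ` in some field with a largest possible set `J` of coordinates algebraically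
independent over `ℤ`. By maximality, once the coordinates in `J` are fixed, all common zeros in
extension fields have algebraic coordinates. -/
theorem exists_maximal_indep (f : Fin s → MvPolynomial (Fin t) ℤ)
    (hzero : ∃ x : Fin t → ℂ, ∀ i, aeval x (f i) = 0) :
    ∃ (J : Set (Fin t)) (F : Type) (_ : Field F) (ξ : Fin t → F),
      (∀ i, aeval ξ (f i) = 0) ∧ AlgebraicIndepOn ℤ ξ J ∧
      ∀ (K : Type) [Field K] (ψ : F →+* K) (y : Fin t → K), (∀ k ∈ J, y k = ψ (ξ k)) →
        (∀ i, aeval y (f i) = 0) → ∀ j ∉ J, ∃ q : Polynomial F, q ≠ 0 ∧ q.eval₂ ψ (y j) = 0 := by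
  let P : Set (Set (Fin t)) := {J | ∃ (F : Type) (_ : Field F) (ξ : Fin t → F),
    (∀ i, aeval ξ (f i) = 0) ∧ AlgebraicIndepOn ℤ ξ J}
  have hP : P.Nonempty := by
    obtain ⟨x, hx⟩ := hzero
    refine ⟨∅, ℂ, inferInstance, x, hx, ?_⟩
    rw [AlgebraicIndepOn, algebraicIndependent_empty_type_iff]
    exact (algebraMap ℤ ℂ).injective_int
  obtain ⟨J, hJ⟩ := (Set.toFinite P).exists_maximal hP
  obtain ⟨F, _, ξ, hξ, hind⟩ := hJ.prop
  refine ⟨J, F, _, ξ, hξ, hind, fun K _ ψ y hy hfy j hj => ?_⟩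
  by_contra! hcon
  let ψa : F →ₐ[ℤ] K := ψ.toIntAlgHom
  have hψ : Function.Injective ψa := ψ.injective
  have hind' : AlgebraicIndepOn ℤ y J := by
    have h := hind.map' hψ
    have : (fun k : J => y k) = ψa ∘ fun k : J => ξ k := funext fun k => hy k k.2
    rw [AlgebraicIndepOn, this]
    exact h
  have hle : Algebra.adjoin ℤ (y '' J) ≤ ψa.range := by
    rw [Algebra.adjoin_le_iff]
    rintro _ ⟨k, hk, rfl⟩
    exact ⟨ξ k, (hy k hk).symm⟩
  have htr : Transcendental (Algebra.adjoin ℤ (y '' J)) (y j) := by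
    rw [transcendental_iff]
    intro q hq
    let e : F ≃ₐ[ℤ] ψa.range := AlgEquiv.ofInjective ψa hψ
    let g : Algebra.adjoin ℤ (y '' J) →ₐ[ℤ] F :=
      (e.symm : ψa.range →ₐ[ℤ] F).comp (Subalgebra.inclusion hle)
    have hg : ∀ a, ψ (g a) = a := by
      intro a
      have h := congrArg Subtype.val (e.apply_symm_apply (Subalgebra.inclusion hle a))
      exact h
    have hgi : Function.Injective (g : Algebra.adjoin ℤ (y '' J) →+* F) :=
      e.symm.injective.comp (Subalgebra.inclusion_injective hle)
    by_contra hq0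
    refine hcon (q.map (g : Algebra.adjoin ℤ (y '' J) →+* F))
      ((Polynomial.map_ne_zero_iff hgi).2 hq0) ?_
    rw [Polynomial.eval₂_map, ← hq, Polynomial.aeval_def]
    congr 1
    exact RingHom.ext hg
  have hmem : insert j J ∈ P := ⟨K, _, y, hfy, hind'.insert htr⟩
  exact hj (hJ.le_of_ge hmem (Set.subset_insert j J) (Set.mem_insert j J))

open Classical in
/-- Integer polynomials in all variables, read as polynomials in the variables outside `J` over
the polynomials in the variables from `J`. -/
noncomputable def splitVars (J : Set (Fin t)) :
    MvPolynomial (Fin t) ℤ →ₐ[ℤ] MvPolynomial {k // k ∉ J} (MvPolynomial J ℤ) :=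
  aeval fun k => if h : k ∈ J then C (X ⟨k, h⟩) else X ⟨k, h⟩

theorem eval₂_splitVars (J : Set (Fin t)) {K : Type} [CommRing K] (θ : MvPolynomial J ℤ →+* K)
    (y : Fin t → K) (hy : ∀ k : J, θ (X k) = y k) (g : MvPolynomial (Fin t) ℤ) :
    eval₂ θ (fun k : {k // k ∉ J} => y k) (splitVars J g) = aeval y g := by
  have h : ((eval₂Hom θ fun k : {k // k ∉ J} => y k).toIntAlgHom.comp (splitVars J)) = aeval y := by
    refine algHom_ext fun k => ?_
    change eval₂ θ _ (splitVars J (X k)) = _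
    rw [splitVars, aeval_X, aeval_X]
    split_ifs with hk
    · rw [eval₂_C, hy]
    · rw [eval₂_X]
  exact DFunLike.congr_fun h g

theorem totalDegree_splitVars_le (J : Set (Fin t)) (g : MvPolynomial (Fin t) ℤ) :
    (splitVars J g).totalDegree ≤ g.totalDegree := by
  rw [splitVars, aeval_def, eval₂_eq]
  refine totalDegree_finsetSum_le fun m hm => (totalDegree_mul _ _).trans ?_
  have h0 : (algebraMap ℤ (MvPolynomial {k // k ∉ J} (MvPolynomial J ℤ)) (g.coeff m)).totalDegree
      = 0 := by
    rw [IsScalarTower.algebraMap_apply ℤ (MvPolynomial J ℤ), algebraMap_eq, totalDegree_C]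
  rw [h0, zero_add]
  refine (totalDegree_finsetProd _ _).trans (le_trans (Finset.sum_le_sum fun k _ => ?_)
    (le_totalDegree hm))
  refine (totalDegree_pow _ _).trans ?_
  split_ifs
  · simp
  · simp [totalDegree_X]

theorem mvNorm_splitVars_le (J : Set (Fin t)) (g : MvPolynomial (Fin t) ℤ) {d H : ℕ}
    (hd : g.totalDegree ≤ d) (hH : ∀ m, |g.coeff m| ≤ (H : ℤ)) :
    mvNorm (mvNorm Int.natAbs) (splitVars J g) ≤ (d + t).choose t * H := by
  have hN := IsSubmultNorm.int
  refine (hN.mv.mv.aeval_le _ (fun k => ?_) g).trans ?_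
  · split_ifs
    · exact (IsSubmultNorm.mvNorm_C _).trans (hN.mvNorm_X _)
    · exact hN.mv.mvNorm_X _
  · refine (Finset.sum_le_card_nsmul _ _ H fun m _ => ?_).trans ?_
    · have h := hH m
      rw [Int.abs_eq_natAbs] at h
      exact_mod_cast h
    · rw [smul_eq_mul]
      gcongr
      have h := card_degree_le d g.support fun m hm => (le_totalDegree hm).trans hd
      rwa [Fintype.card_fin] at h

end Split

/-! ### The obstruction and its size -/

section Assembly

open MvPolynomial

open Classical in
/-- At least two equations: an integer `M` of controlled size such that every prime not dividing
`M` preserves solvability. It is an integer coefficient of the leading coefficient in `W` of the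
lowest coefficient in `E` of the determinant `genDet`. -/
theorem exists_small_obstruction {s t d H : ℕ} (f : Fin s → MvPolynomial (Fin t) ℤ)
    (hdeg : ∀ i, (f i).totalDegree ≤ d) (hd : 1 ≤ d) (hH1 : 1 ≤ H)
    (hH : ∀ i m, |(f i).coeff m| ≤ (H : ℤ))
    (hzero : ∃ x : Fin t → ℂ, ∀ i, aeval x (f i) = 0) (ht : 1 ≤ t) (hs : 2 ≤ s)
    {L : ℕ} (hL : L = s * (d ^ t + t).choose t) :
    ∃ M : ℕ, M ≠ 0 ∧ 2 * Real.logb 2 M ≤ 2 * L * Real.logb 2 H + L * Real.logb 2 L ∧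
      ∀ p : ℕ, [Fact p.Prime] → ¬ p ∣ M →
        ∃ x : Fin t → AlgebraicClosure (ZMod p), ∀ i, aeval x (f i) = 0 := by
  obtain ⟨J, F, _, ξ, hξ, hind, hmax⟩ := exists_maximal_indep f hzero
  let θ : MvPolynomial J ℤ →+* F := (aeval fun k : J => ξ k : MvPolynomial J ℤ →ₐ[ℤ] F)
  have hθ : Function.Injective θ := hind
  have hθX : ∀ k : J, θ (X k) = ξ k := fun k => aeval_X _ k
  let F' : Fin s → MvPolynomial {k // k ∉ J} (MvPolynomial J ℤ) := fun i => splitVars J (f i)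
  let n := Fintype.card {k // k ∉ J}
  have hn : n ≤ t := (Fintype.card_subtype_le _).trans (Fintype.card_fin t).le
  let N := n * (d - 1) + 1
  let D := (genDet d N F').trailingCoeff
  have hroot : D.eval₂ (map θ) (-∑ j : {k // k ∉ J}, C (ξ j) * X (Sum.inr j)) = 0 := by
    refine genDet_root d N le_rfl F' (fun i => (totalDegree_splitVars_le J _).trans (hdeg i)) θ
      (fun j => ξ j) (fun i => ?_) fun K _ ψ x hx j => ?_
    · rw [← hξ i]
      exact eval₂_splitVars J θ ξ hθX (f i)
    · let y : Fin t → K := fun k => if h : k ∈ J then ψ (ξ k) else x ⟨k, h⟩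
      have hyx : (fun k : {k // k ∉ J} => y k) = x := funext fun k => dif_neg k.2
      have h := hmax K ψ y (fun k hk => dif_pos hk) (fun i => ?_) j j.2
      · rwa [show y j = x j from congrFun hyx j] at h
      · rw [← hx i, ← hyx]
        refine (eval₂_splitVars J (ψ.comp θ) y (fun k => ?_) (f i)).symm
        rw [RingHom.comp_apply, hθX]
        simp [y]
  have hD : D.leadingCoeff ≠ 0 :=
    Polynomial.leadingCoeff_ne_zero.2 (Polynomial.trailingCoeff_nonzero_iff_nonzero.2
      (genDet_ne_zero d N F'))
  obtain ⟨m, hm⟩ := ne_zero_iff.1 hD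
  obtain ⟨k, hk⟩ := ne_zero_iff.1 hm
  refine ⟨((D.leadingCoeff.coeff m).coeff k).natAbs, Int.natAbs_ne_zero.2 hk, ?_, ?_⟩
  · have hR : Fintype.card (MacIndex {k // k ∉ J} N) ≤ (d ^ t + t).choose t :=
      card_macIndex_le hd hn
    have hR1 : 1 ≤ Fintype.card (MacIndex {k // k ∉ J} N) :=
      Fintype.card_pos_iff.2 ⟨⟨0, by simp⟩⟩
    have hdt : 1 ≤ d ^ t := Nat.one_le_pow _ _ hd
    have hdd : d ≤ d ^ t := Nat.le_self_pow (by omega) d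
    have htC : 1 + t ≤ (d ^ t + t).choose t := by
      have h := choose_add_mono hdt (le_refl t)
      rwa [← Nat.choose_symm_add, Nat.choose_one_right] at h
    have h2 : 2 * (d ^ t + t).choose t ≤ L := hL ▸ Nat.mul_le_mul_right _ hs
    refine two_mul_logb_le hH1 hR1 (by omega) (n := n) (by omega) (Int.natAbs_ne_zero.2 hk) ?_
    refine (IsSubmultNorm.int.coeff_le_mvNorm _ k).trans
      (norm_coeff_genDet_le IsSubmultNorm.int.mv d N hd F' _ ?_ ?_ m)
    · have h3 : ∑ i, mvNorm (mvNorm Int.natAbs) (F' i) ≤ L * H := by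
        refine (Finset.sum_le_card_nsmul _ _ ((d ^ t + t).choose t * H) fun i _ => ?_).trans ?_
        · refine (mvNorm_splitVars_le J (f i) (hdeg i) (hH i)).trans ?_
          exact Nat.mul_le_mul_right _ (choose_add_mono hdd le_rfl)
        · simp [hL, mul_assoc]
      nlinarith
    · have : 1 + n ≤ 1 + L := by omega
      exact this.trans (Nat.le_mul_of_pos_left _ hH1)
  · intro p hp hdvd
    let r : MvPolynomial J ℤ →+* MvPolynomial J (ZMod p) := map (Int.castRingHom (ZMod p))
    have : (RingHom.ker r).IsPrime := RingHom.ker_isPrime r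
    have hpr : (p : MvPolynomial J ℤ) ∈ RingHom.ker r := by
      rw [RingHom.mem_ker, map_natCast, ← map_natCast (C : ZMod p →+* MvPolynomial J (ZMod p)),
        CharP.cast_eq_zero, map_zero]
    have hmr : D.leadingCoeff.coeff m ∉ RingHom.ker r := by
      intro h
      have h2 := congrArg (coeff k) (RingHom.mem_ker.1 h)
      rw [coeff_map, coeff_zero, eq_intCast, ZMod.intCast_zmod_eq_zero_iff_dvd _ p] at h2
      exact hdvd (Int.natCast_dvd.1 h2)
    obtain ⟨O, hpO, hθO, hξO⟩ :=
      exists_good_valuation θ hθ (fun j : {k // k ∉ J} => ξ j) D hroot (RingHom.ker r) hpr m hmr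
    refine exists_zero_of_mem_valuationSubring f O hpO ξ (fun j => ?_) hξ
    by_cases hj : j ∈ J
    · rw [← hθX ⟨j, hj⟩]
      exact hθO _
    · exact hξO ⟨j, hj⟩

end Assembly

theorem exists_small_prime_with_common_zero
    (s t d H : ℕ) (f : Fin s → MvPolynomial (Fin t) ℤ)
    (hdeg : ∀ i, 1 ≤ (f i).totalDegree ∧ (f i).totalDegree ≤ d)
    (hH : ∀ i m, |(f i).coeff m| ≤ (H : ℤ))
    (hzero : ∃ x : Fin t → ℂ, ∀ i, MvPolynomial.aeval x (f i) = 0)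
    (L : ℕ) (hL : L = s * (d ^ t + t).choose t) :
    ∃ p : ℕ, ∃ _ : Fact p.Prime,
      (p : ℝ) < 6 + 2 * L * Real.logb 2 H + L * Real.logb 2 L ∧
      ∃ x : Fin t → AlgebraicClosure (ZMod p),
        ∀ i, MvPolynomial.aeval x (f i) = 0 := by
  have hCpos : 0 < (d ^ t + t).choose t := Nat.choose_pos (Nat.le_add_left t _)
  obtain rfl | rfl | hs : s = 0 ∨ s = 1 ∨ 2 ≤ s := by omega
  · refine ⟨2, ⟨Nat.prime_two⟩, ?_, 0, fun i => i.elim0⟩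
    rw [hL]
    norm_num
  · exact exists_prime_single f (fun i => (hdeg i).1) hH (by omega)
  · let i₀ : Fin s := ⟨0, by omega⟩
    have hd : 1 ≤ d := (hdeg i₀).1.trans (hdeg i₀).2
    have hf0 : f i₀ ≠ 0 := by
      intro h
      have := (hdeg i₀).1
      simp [h] at this
    have ht : 1 ≤ t := by
      by_contra! ht
      obtain rfl : t = 0 := by omega
      have h := (hdeg i₀).1
      rw [MvPolynomial.eq_C_of_isEmpty (f i₀), MvPolynomial.totalDegree_C] at h
      omega
    have hH1 : 1 ≤ H := by
      obtain ⟨m, hm⟩ := MvPolynomial.ne_zero_iff.1 hf0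
      exact_mod_cast (Int.one_le_abs hm).trans (hH i₀ m)
    obtain ⟨M, hM0, hM, hgood⟩ :=
      exists_small_obstruction f (fun i => (hdeg i).2) hd hH1 hH hzero ht hs hL
    obtain ⟨p, hp, hdvd, hlt⟩ := exists_prime_not_dvd M hM0
    have : Fact p.Prime := ⟨hp⟩
    exact ⟨p, this, by linarith, hgood p hdvd⟩
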